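/- arXiv:2006.12476 — 3 statements merged into one kernel-verified Lean document; each statement's English description precedes it below -/
import Mathlib

section
/- Let p : ℝ² → ℝ satisfy E_{x∼N²}[p(x)²] < ∞, and for m ≥ 0 let p^{[m]} denote the orthogonal projection of p in L²(ℝ², N²) onto the m-th Gaussian chaos W_m, where W_m is the orthogonal complement of the closed span of polynomials of degree at most m−1 inside the closed span of polynomials of degree at most m. Let U, V ∈ ℝ^{2×d} be matrices with U Uᵀ = V Vᵀ = I₂. Then E_{x∼N^d}[p(U x) · p(V x)] ≤ Σ_{m=0}^∞ ‖U Vᵀ‖₂^m · E_{x∼N²}[(p^{[m]}(x))²]. -/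
/-!
The chaos `W_m` is the eigenspace, for the eigenvalue `m`, of the number operator
`ou P = ∑ᵢ (xᵢ ∂ᵢ P - ∂ᵢ² P)` acting on polynomials (`ou_of_inChaos`, `inChaos_of_ou`). Write
`B(P, Q) = 𝔼[P(Ux) Q(Vx)]` and `M = U Vᵀ`. Gaussian integration by parts gives
`B(ou P, Q) = ∑ᵢⱼ Mᵢⱼ B(∂ᵢP, ∂ⱼQ) = B(P, ou Q)` (`cB_ou_left`, `cB_ou_right`), with two consequences.

* Different chaoses are orthogonal for `B` (`cB_orth`), in particular in `L²`.
* On `W_m`, `m B(P, Q) = ∑ᵢ B(∂ᵢP, (M ∇Q)ᵢ)`. The derivatives `∂ᵢP` and `(M ∇Q)ᵢ` lie in `W_{m-1}`,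
  `|M ∇Q| ≤ ‖M‖ |∇Q|` pointwise, and `𝔼|∇P|² = m 𝔼[P²]`. By induction on `m`,
  `2 B(P, Q) ≤ ‖M‖ᵐ (𝔼[P²] + 𝔼[Q²])` (`cB_bound`).

So the inequality holds for each partial sum `S_N = ∑_{m < N} q_m`, the cross terms vanishing. Every
polynomial is a finite sum of eigenvectors of `ou` (`chaos_decomp`), so `p - S_N` is orthogonal to all
polynomials of degree less than `N`, and `S_N` is the best approximation to `p` by such polynomials.
Polynomials are dense in `L²` of the Gaussian, because a function orthogonal to all of them has
vanishing Fourier transform against the Gaussian (`poly_dense`); hence `S_N` gets arbitrarily close to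
`p`. Since `Ux` and `Vx` are standard Gaussian (`mp_mulVec`), the correlation form is bounded on `L²`
(`corr_le`), and the bound for `S_N` passes to `p`.
-/

open MeasureTheory ProbabilityTheory Real Finset

noncomputable def stdGaussian (d : ℕ) : Measure (Fin d → ℝ) :=
  Measure.pi fun _ => gaussianReal 0 1

/-- Spectral (operator) norm of a square real matrix. -/
noncomputable def spec {n : ℕ} (M : Matrix (Fin n) (Fin n) ℝ) : ℝ :=
  ‖Matrix.toEuclideanCLM (𝕜 := ℝ) M‖

/-- `g` is (the function of) a polynomial on `ℝ²` of total degree at most `m`. -/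
def IsPolyOfDeg (m : ℕ) (g : (Fin 2 → ℝ) → ℝ) : Prop :=
  ∃ P : MvPolynomial (Fin 2) ℝ, P.totalDegree ≤ m ∧ ∀ x, g x = MvPolynomial.eval x P

/-- `g` belongs to the `m`-th Gaussian chaos `W_m` of `L²(ℝ², N²)`: it is a polynomial of
degree at most `m` that is orthogonal to all polynomials of degree `< m`. -/
def InChaos (m : ℕ) (g : (Fin 2 → ℝ) → ℝ) : Prop :=
  IsPolyOfDeg m g ∧
    ∀ R : MvPolynomial (Fin 2) ℝ, R.totalDegree < m →
      ∫ x, g x * MvPolynomial.eval x R ∂stdGaussian 2 = 0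

/-! ### Gaussian integration by parts for polynomials -/

instance (d : ℕ) : IsProbabilityMeasure (_root_.stdGaussian d) := by
  unfold _root_.stdGaussian; infer_instance

lemma integrable_pow_gauss (n : ℕ) : Integrable (fun x : ℝ => x ^ n) (gaussianReal 0 1) := by
  have h := memLp_id_gaussianReal (μ := 0) (v := 1) (n : NNReal)
  have h2 : Integrable (fun x : ℝ => ‖x‖ ^ n) (gaussianReal 0 1) := by
    have := h.integrable_norm_rpow'
    simpa using this
  refine (integrable_norm_iff (by fun_prop)).1 ?_
  simpa using h2

/-- The one-dimensional Gaussian integration by parts formula `𝔼[x · xⁿ] = n 𝔼[xⁿ⁻¹]`. -/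
lemma moment_rec (n : ℕ) : ∫ x, x ^ (n + 1) ∂gaussianReal 0 1
    = n * ∫ x, x ^ (n - 1) ∂gaussianReal 0 1 := by
  have hi : ∀ k : ℕ, Integrable (fun x : ℝ => x ^ k * gaussianPDFReal 0 1 x) := by
    intro k
    have h := integrable_pow_gauss k
    rw [gaussianReal_of_var_ne_zero 0 one_ne_zero, integrable_withDensity_iff
      (measurable_gaussianPDF 0 1) (by simp [gaussianPDF])] at h
    simpa [gaussianPDF, ENNReal.toReal_ofReal (gaussianPDFReal_nonneg 0 1 _)] using h
  have hd : ∀ x : ℝ, HasDerivAt (gaussianPDFReal 0 1) (-x * gaussianPDFReal 0 1 x) x := by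
    intro x
    unfold gaussianPDFReal
    have := (((((hasDerivAt_id x).sub_const 0).pow 2).neg.div_const
      (2 * ((1 : NNReal) : ℝ))).exp).const_mul ((√(2 * π * ((1 : NNReal) : ℝ)))⁻¹)
    refine this.congr_deriv ?_
    simp
    ring
  have key := integral_mul_deriv_eq_deriv_mul_of_integrable
    (u := fun x : ℝ => x ^ n) (u' := fun x => n * x ^ (n - 1))
    (v := gaussianPDFReal 0 1) (v' := fun x => -x * gaussianPDFReal 0 1 x)
    (fun x _ => by simpa using hasDerivAt_pow n x) (fun x _ => hd x)
    (by
      refine (hi (n + 1)).neg.congr (Filter.Eventually.of_forall fun x => ?_)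
      simp [pow_succ]; ring)
    (by
      refine ((hi (n - 1)).const_mul (n : ℝ)).congr (Filter.Eventually.of_forall fun x => ?_)
      simp; ring)
    (by simpa [Pi.mul_def] using hi n)
  simp_rw [integral_gaussianReal_eq_integral_smul (one_ne_zero : (1 : NNReal) ≠ 0), smul_eq_mul]
  have e1 : ∫ x : ℝ, gaussianPDFReal 0 1 x * x ^ (n + 1)
      = -∫ x : ℝ, x ^ n * (-x * gaussianPDFReal 0 1 x) := by
    rw [← integral_neg]; congr 1; ext x; ring
  rw [e1, key, neg_neg, ← integral_const_mul]
  congr 1; ext x; ring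

lemma eval_monomial_prod {d : ℕ} (a : Fin d →₀ ℕ) (r : ℝ) (x : Fin d → ℝ) :
    MvPolynomial.eval x (MvPolynomial.monomial a r) = r * ∏ i, x i ^ a i := by
  rw [MvPolynomial.eval_monomial, Finsupp.prod_fintype _ _ (by simp)]

lemma integrable_poly {d : ℕ} (P : MvPolynomial (Fin d) ℝ) :
    Integrable (fun x => MvPolynomial.eval x P) (_root_.stdGaussian d) := by
  induction P using MvPolynomial.induction_on' with
  | monomial a r =>
    simp_rw [eval_monomial_prod]
    refine Integrable.const_mul ?_ r
    exact Integrable.fintype_prod (f := fun i (x : ℝ) => x ^ a i)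
      (fun i => integrable_pow_gauss (a i))
  | add p q hp hq =>
    simp only [map_add]
    exact hp.add hq

/-- The Gaussian expectation as a linear functional on polynomials. -/
noncomputable def gE (d : ℕ) : MvPolynomial (Fin d) ℝ →ₗ[ℝ] ℝ where
  toFun P := ∫ x, MvPolynomial.eval x P ∂_root_.stdGaussian d
  map_add' P Q := by
    simp only [map_add]; exact integral_add (integrable_poly P) (integrable_poly Q)
  map_smul' c P := by
    simp only [MvPolynomial.smul_eval, RingHom.id_apply, smul_eq_mul]
    exact integral_const_mul _ _

lemma gE_apply {d : ℕ} (P : MvPolynomial (Fin d) ℝ) :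
    gE d P = ∫ x, MvPolynomial.eval x P ∂_root_.stdGaussian d := rfl

lemma gE_nonneg {d : ℕ} (P : MvPolynomial (Fin d) ℝ) (h : ∀ x, 0 ≤ MvPolynomial.eval x P) :
    0 ≤ gE d P := integral_nonneg h

lemma gE_monomial {d : ℕ} (a : Fin d →₀ ℕ) (r : ℝ) :
    gE d (MvPolynomial.monomial a r) = r * ∏ i, ∫ x, x ^ a i ∂gaussianReal 0 1 := by
  rw [gE_apply]
  simp_rw [eval_monomial_prod]
  rw [integral_const_mul]
  congr 1
  exact integral_fintype_prod_eq_prod (fun i (x : ℝ) => x ^ a i)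

/-- Gaussian integration by parts (Stein's identity) for polynomials. -/
lemma gE_stein {d : ℕ} (k : Fin d) (F : MvPolynomial (Fin d) ℝ) :
    gE d (MvPolynomial.X k * F) = gE d (MvPolynomial.pderiv k F) := by
  induction F using MvPolynomial.induction_on' with
  | monomial a r =>
    rw [MvPolynomial.X, MvPolynomial.monomial_mul, MvPolynomial.pderiv_monomial, gE_monomial,
      gE_monomial, Fintype.prod_eq_mul_prod_compl k, Fintype.prod_eq_mul_prod_compl k]
    have h : ∀ b : Fin d →₀ ℕ, (∀ i, i ≠ k → b i = a i) →
        ∏ i ∈ ({k} : Finset (Fin d))ᶜ, ∫ x, x ^ b i ∂gaussianReal 0 1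
        = ∏ i ∈ ({k} : Finset (Fin d))ᶜ, ∫ x, x ^ a i ∂gaussianReal 0 1 := by
      intro b hb
      refine Finset.prod_congr rfl fun i hi => ?_
      rw [hb i (by simpa using hi)]
    rw [h (Finsupp.single k 1 + a) (fun i hi => by simp [Finsupp.single_eq_of_ne hi]),
      h (a - Finsupp.single k 1) (fun i hi => by simp [Finsupp.single_eq_of_ne hi])]
    simp only [Finsupp.add_apply, Finsupp.single_eq_same, Finsupp.tsub_apply]
    rw [add_comm 1 (a k), moment_rec]
    ring
  | add p q hp hq => simp [mul_add, hp, hq]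

lemma transpose_norm {d : ℕ} (U : Matrix (Fin 2) (Fin d) ℝ) (hU : U * U.transpose = 1)
    (t : Fin 2 → ℝ) : ∑ k, (U.transpose.mulVec t) k ^ 2 = ∑ i, t i ^ 2 := by
  have h : (U.transpose.mulVec t) ⬝ᵥ (U.transpose.mulVec t) = t ⬝ᵥ t := by
    rw [Matrix.dotProduct_mulVec, Matrix.vecMul_transpose, Matrix.mulVec_mulVec, hU,
      Matrix.one_mulVec]
  simpa [dotProduct, sq] using h

open WithLp in
/-- If `U Uᵀ = 1` and `x` is standard Gaussian, then so is `U x`. -/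
lemma mp_mulVec {d : ℕ} (U : Matrix (Fin 2) (Fin d) ℝ) (hU : U * U.transpose = 1) :
    MeasurePreserving U.mulVec (_root_.stdGaussian d) (_root_.stdGaussian 2) := by
  have hm : Measurable U.mulVec := by
    unfold Matrix.mulVec; fun_prop
  refine ⟨hm, ?_⟩
  have hinj : (fun μ : Measure (Fin 2 → ℝ) => μ.map (toLp 2)).Injective := by
    intro μ ν h
    have h2 := congrArg (fun ρ : Measure (EuclideanSpace ℝ (Fin 2)) => ρ.map (ofLp)) h
    simp only at h2
    rw [Measure.map_map (by fun_prop) (by fun_prop),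
      Measure.map_map (by fun_prop) (by fun_prop)] at h2
    have h3 : (ofLp ∘ toLp 2 : (Fin 2 → ℝ) → (Fin 2 → ℝ)) = id := rfl
    simpa [h3] using h2
  apply hinj
  simp only
  -- both sides have characteristic function `exp (-‖t‖² / 2)`, as `‖Uᵀ t‖ = ‖t‖`
  have hc : ∀ (n : ℕ) (t : EuclideanSpace ℝ (Fin n)),
      charFun ((_root_.stdGaussian n).map (toLp 2)) t = Complex.exp (-(∑ i, t i ^ 2 : ℝ) / 2) := by
    intro n t
    rw [_root_.stdGaussian, map_pi_eq_stdGaussian, charFun_stdGaussian,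
      ← EuclideanSpace.real_norm_sq_eq]
    push_cast
    rfl
  apply Measure.ext_of_charFun (E := EuclideanSpace ℝ (Fin 2))
  ext t
  rw [hc, ← transpose_norm U hU, ← hc d (toLp 2 (U.transpose.mulVec t))]
  rw [Measure.map_map (by fun_prop) hm, charFun_apply, charFun_apply,
    integral_map (by fun_prop) (by fun_prop), integral_map (by fun_prop) (by fun_prop)]
  congr 1; ext x
  congr 3
  simp only [Function.comp, EuclideanSpace.inner_eq_star_dotProduct,
    star_trivial]
  rw [Matrix.dotProduct_mulVec, Matrix.mulVec_transpose]

/-! ### The correlation form and the number operator -/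

/-- The substitution `P ↦ P ∘ U` on polynomials. -/
noncomputable def pb {d : ℕ} (U : Matrix (Fin 2) (Fin d) ℝ) :
    MvPolynomial (Fin 2) ℝ →ₐ[ℝ] MvPolynomial (Fin d) ℝ :=
  MvPolynomial.aeval fun i => ∑ k, U i k • MvPolynomial.X k

lemma eval_pb {d : ℕ} (U : Matrix (Fin 2) (Fin d) ℝ) (P : MvPolynomial (Fin 2) ℝ)
    (x : Fin d → ℝ) :
    MvPolynomial.eval x (pb U P) = MvPolynomial.eval (U.mulVec x) P := by
  induction P using MvPolynomial.induction_on with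
  | C a => simp [pb]
  | add p q hp hq => simp [hp, hq]
  | mul_X p i hp =>
    rw [map_mul, map_mul, hp, map_mul]
    simp [pb, Matrix.mulVec, dotProduct]

lemma pderiv_pb {d : ℕ} (U : Matrix (Fin 2) (Fin d) ℝ) (P : MvPolynomial (Fin 2) ℝ) (k : Fin d) :
    MvPolynomial.pderiv k (pb U P) = ∑ j, U j k • pb U (MvPolynomial.pderiv j P) := by
  induction P using MvPolynomial.induction_on with
  | C a => simp [pb]
  | add p q hp hq => simp [hp, hq, Finset.sum_add_distrib]
  | mul_X p i hp =>
    have hX : MvPolynomial.pderiv k (pb U (MvPolynomial.X i)) = MvPolynomial.C (U i k) := by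
      simp only [pb, MvPolynomial.aeval_X, map_sum, Derivation.map_smul]
      rw [Finset.sum_eq_single k]
      · simp [MvPolynomial.smul_eq_C_mul]
      · intro b _ hb; simp [MvPolynomial.pderiv_X_of_ne hb]
      · simp
    rw [map_mul, MvPolynomial.pderiv_mul, hp, hX]
    simp only [MvPolynomial.pderiv_mul, map_add, map_mul, smul_add, Finset.sum_add_distrib,
      Finset.sum_mul, smul_mul_assoc]
    congr 1
    rw [Finset.sum_eq_single i]
    · simp [MvPolynomial.smul_eq_C_mul, mul_comm]
    · intro b _ hb; simp [MvPolynomial.pderiv_X_of_ne hb.symm]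
    · simp

lemma gE_pb {d : ℕ} (U : Matrix (Fin 2) (Fin d) ℝ) (hU : U * U.transpose = 1)
    (P : MvPolynomial (Fin 2) ℝ) : gE d (pb U P) = gE 2 P := by
  have h := mp_mulVec U hU
  rw [gE_apply, gE_apply, ← h.map_eq, integral_map h.measurable.aemeasurable
    (MvPolynomial.continuous_eval P).aestronglyMeasurable]
  simp_rw [eval_pb]

/-- The correlation form `(P, Q) ↦ 𝔼[P(Ux) Q(Vx)]` on polynomials. -/
noncomputable def cB {d : ℕ} (U V : Matrix (Fin 2) (Fin d) ℝ) (P Q : MvPolynomial (Fin 2) ℝ) : ℝ :=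
  gE d (pb U P * pb V Q)

lemma cB_comm {d : ℕ} (U V : Matrix (Fin 2) (Fin d) ℝ) (P Q : MvPolynomial (Fin 2) ℝ) :
    cB U V P Q = cB V U Q P := by rw [cB, cB, mul_comm]

lemma cB_add_left {d : ℕ} (U V : Matrix (Fin 2) (Fin d) ℝ) (P P' Q : MvPolynomial (Fin 2) ℝ) :
    cB U V (P + P') Q = cB U V P Q + cB U V P' Q := by simp [cB, add_mul]

lemma cB_sub_left {d : ℕ} (U V : Matrix (Fin 2) (Fin d) ℝ) (P P' Q : MvPolynomial (Fin 2) ℝ) :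
    cB U V (P - P') Q = cB U V P Q - cB U V P' Q := by simp [cB, sub_mul]

lemma cB_smul_left {d : ℕ} (U V : Matrix (Fin 2) (Fin d) ℝ) (c : ℝ)
    (P Q : MvPolynomial (Fin 2) ℝ) : cB U V (c • P) Q = c * cB U V P Q := by simp [cB]

lemma cB_smul_right {d : ℕ} (U V : Matrix (Fin 2) (Fin d) ℝ) (c : ℝ)
    (P Q : MvPolynomial (Fin 2) ℝ) : cB U V P (c • Q) = c * cB U V P Q := by simp [cB]

lemma cB_sum_left {d : ℕ} (U V : Matrix (Fin 2) (Fin d) ℝ) {ι : Type*} (s : Finset ι)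
    (P : ι → MvPolynomial (Fin 2) ℝ) (Q : MvPolynomial (Fin 2) ℝ) :
    cB U V (∑ i ∈ s, P i) Q = ∑ i ∈ s, cB U V (P i) Q := by simp [cB, Finset.sum_mul]

lemma cB_sum_right {d : ℕ} (U V : Matrix (Fin 2) (Fin d) ℝ) {ι : Type*} (s : Finset ι)
    (P : MvPolynomial (Fin 2) ℝ) (Q : ι → MvPolynomial (Fin 2) ℝ) :
    cB U V P (∑ i ∈ s, Q i) = ∑ i ∈ s, cB U V P (Q i) := by simp [cB, Finset.mul_sum]

lemma cB_self {d : ℕ} (U : Matrix (Fin 2) (Fin d) ℝ) (hU : U * U.transpose = 1)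
    (P Q : MvPolynomial (Fin 2) ℝ) : cB U U P Q = gE 2 (P * Q) := by
  rw [cB, ← map_mul, gE_pb U hU]

lemma cB_one (P Q : MvPolynomial (Fin 2) ℝ) :
    cB (1 : Matrix (Fin 2) (Fin 2) ℝ) 1 P Q = gE 2 (P * Q) := cB_self 1 (by simp) P Q

/-- Integration by parts for the correlation form. -/
lemma cB_X_mul {d : ℕ} (U V : Matrix (Fin 2) (Fin d) ℝ) (hU : U * U.transpose = 1)
    (i : Fin 2) (P Q : MvPolynomial (Fin 2) ℝ) :
    cB U V (MvPolynomial.X i * P) Q = cB U V (MvPolynomial.pderiv i P) Q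
      + ∑ j, (U * V.transpose) i j * cB U V P (MvPolynomial.pderiv j Q) := by
  have h1 : cB U V (MvPolynomial.X i * P) Q
      = ∑ k, U i k * gE d (MvPolynomial.X k * (pb U P * pb V Q)) := by
    have : pb U (MvPolynomial.X i) = ∑ k, U i k • MvPolynomial.X k := by simp [pb]
    rw [cB, map_mul (pb U), this, Finset.sum_mul, Finset.sum_mul, map_sum]
    refine Finset.sum_congr rfl fun k _ => ?_
    rw [smul_mul_assoc, smul_mul_assoc, map_smul, smul_eq_mul, mul_assoc]
  have h2 : ∀ k, gE d (MvPolynomial.X k * (pb U P * pb V Q))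
      = ∑ j, U j k * cB U V (MvPolynomial.pderiv j P) Q
        + ∑ j, V j k * cB U V P (MvPolynomial.pderiv j Q) := by
    intro k
    rw [gE_stein, MvPolynomial.pderiv_mul, pderiv_pb, pderiv_pb, map_add, Finset.sum_mul,
      Finset.mul_sum, map_sum, map_sum]
    simp [cB]
  rw [h1]
  simp_rw [h2, mul_add, Finset.sum_add_distrib, Finset.mul_sum]
  congr 1
  · rw [Finset.sum_comm]
    have h3 : ∀ j, ∑ k, U i k * (U j k * cB U V (MvPolynomial.pderiv j P) Q)
        = (U * U.transpose) i j * cB U V (MvPolynomial.pderiv j P) Q := by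
      intro j
      simp only [Matrix.mul_apply, Matrix.transpose_apply, Finset.sum_mul, mul_assoc]
    simp_rw [h3, hU, Matrix.one_apply]
    simp
  · rw [Finset.sum_comm]
    refine Finset.sum_congr rfl fun j _ => ?_
    simp only [Matrix.mul_apply, Matrix.transpose_apply, Finset.sum_mul, mul_assoc]

/-- The Ornstein–Uhlenbeck (number) operator `∑ᵢ (xᵢ ∂ᵢ − ∂ᵢ²)` on polynomials. Its eigenspace for
the eigenvalue `m` is the `m`-th chaos. -/
noncomputable def ou (P : MvPolynomial (Fin 2) ℝ) : MvPolynomial (Fin 2) ℝ :=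
  ∑ i, (MvPolynomial.X i * MvPolynomial.pderiv i P
    - MvPolynomial.pderiv i (MvPolynomial.pderiv i P))

lemma ou_add (P Q : MvPolynomial (Fin 2) ℝ) : ou (P + Q) = ou P + ou Q := by
  simp only [ou, Fin.sum_univ_two, map_add]; ring

lemma ou_smul (c : ℝ) (P : MvPolynomial (Fin 2) ℝ) : ou (c • P) = c • ou P := by
  simp only [ou, Fin.sum_univ_two, MvPolynomial.smul_eq_C_mul, MvPolynomial.pderiv_C_mul]; ring

lemma ou_sub (P Q : MvPolynomial (Fin 2) ℝ) : ou (P - Q) = ou P - ou Q := by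
  simp only [ou, Fin.sum_univ_two, map_sub]; ring

lemma ou_sum {ι : Type*} (s : Finset ι) (P : ι → MvPolynomial (Fin 2) ℝ) :
    ou (∑ i ∈ s, P i) = ∑ i ∈ s, ou (P i) := by
  induction s using Finset.cons_induction with
  | empty => simp [ou]
  | cons a s ha ih => simp [Finset.sum_cons, ou_add, ih]

lemma pderiv_comm' (i j : Fin 2) (P : MvPolynomial (Fin 2) ℝ) :
    MvPolynomial.pderiv i (MvPolynomial.pderiv j P)
      = MvPolynomial.pderiv j (MvPolynomial.pderiv i P) := by
  have h : ⁅(MvPolynomial.pderiv i : Derivation ℝ (MvPolynomial (Fin 2) ℝ) (MvPolynomial (Fin 2) ℝ)),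
      (MvPolynomial.pderiv j : Derivation ℝ (MvPolynomial (Fin 2) ℝ)
        (MvPolynomial (Fin 2) ℝ))⁆ = 0 := by
    apply MvPolynomial.derivation_ext
    intro k
    rw [Derivation.commutator_apply, MvPolynomial.pderiv_X, MvPolynomial.pderiv_X]
    simp only [Pi.single_apply, apply_ite, map_zero]
    simp
  have h2 := congrArg (fun D => D P) h
  simp only [Derivation.commutator_apply, Derivation.zero_apply] at h2
  exact sub_eq_zero.1 h2

/-- `∂ᵢ` lowers the eigenvalue of the number operator by one. -/
lemma ou_pderiv (i : Fin 2) (P : MvPolynomial (Fin 2) ℝ) :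
    ou (MvPolynomial.pderiv i P) = MvPolynomial.pderiv i (ou P) - MvPolynomial.pderiv i P := by
  have h10 : MvPolynomial.pderiv 1 (MvPolynomial.pderiv 0 P)
      = MvPolynomial.pderiv 0 (MvPolynomial.pderiv 1 P) := pderiv_comm' 1 0 P
  have h10' := pderiv_comm' 1 0 (MvPolynomial.pderiv 0 P)
  have h10'' := pderiv_comm' 1 0 (MvPolynomial.pderiv 1 P)
  fin_cases i <;>
  simp only [ou, Fin.sum_univ_two, map_add, map_sub, MvPolynomial.pderiv_mul,
    MvPolynomial.pderiv_X_self, MvPolynomial.pderiv_X_of_ne (R := ℝ) (zero_ne_one' (Fin 2)),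
    MvPolynomial.pderiv_X_of_ne (R := ℝ) (one_ne_zero' (Fin 2)), h10, h10', h10'', Fin.zero_eta,
    Fin.mk_one] <;> ring

lemma cB_ou_left {d : ℕ} (U V : Matrix (Fin 2) (Fin d) ℝ) (hU : U * U.transpose = 1)
    (P Q : MvPolynomial (Fin 2) ℝ) :
    cB U V (ou P) Q = ∑ i, ∑ j, (U * V.transpose) i j
      * cB U V (MvPolynomial.pderiv i P) (MvPolynomial.pderiv j Q) := by
  rw [ou, cB_sum_left]
  refine Finset.sum_congr rfl fun i _ => ?_
  rw [cB_sub_left, cB_X_mul U V hU]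
  ring

lemma cB_ou_right {d : ℕ} (U V : Matrix (Fin 2) (Fin d) ℝ) (hU : U * U.transpose = 1)
    (hV : V * V.transpose = 1) (P Q : MvPolynomial (Fin 2) ℝ) :
    cB U V P (ou Q) = cB U V (ou P) Q := by
  rw [cB_comm, cB_ou_left V U hV, cB_ou_left U V hU, Finset.sum_comm]
  refine Finset.sum_congr rfl fun i _ => Finset.sum_congr rfl fun j _ => ?_
  rw [cB_comm V U]
  congr 1
  simp [Matrix.mul_apply, mul_comm]

/-- Different chaoses are uncorrelated, even under correlated projections. -/
lemma cB_orth {d : ℕ} (U V : Matrix (Fin 2) (Fin d) ℝ) (hU : U * U.transpose = 1)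
    (hV : V * V.transpose = 1) {m n : ℕ} (hmn : m ≠ n) (P Q : MvPolynomial (Fin 2) ℝ)
    (hP : ou P = (m : ℝ) • P) (hQ : ou Q = (n : ℝ) • Q) : cB U V P Q = 0 := by
  have h := cB_ou_right U V hU hV P Q
  rw [hP, hQ, cB_smul_left, cB_smul_right] at h
  have h2 : ((n : ℝ) - m) * cB U V P Q = 0 := by linarith
  rcases mul_eq_zero.1 h2 with h3 | h3
  · exact absurd (by exact_mod_cast (sub_eq_zero.1 h3).symm) hmn
  · exact h3

/-- The Dirichlet form identity `𝔼|∇P|² = m 𝔼[P²]` on the `m`-th chaos. -/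
lemma sum_grad {m : ℕ} (P : MvPolynomial (Fin 2) ℝ) (hP : ou P = (m : ℝ) • P) :
    ∑ i, gE 2 (MvPolynomial.pderiv i P * MvPolynomial.pderiv i P) = m * gE 2 (P * P) := by
  have h := cB_ou_left (1 : Matrix (Fin 2) (Fin 2) ℝ) 1 (by simp) P P
  rw [hP, cB_smul_left, cB_one] at h
  rw [h]
  simp [cB_one, Matrix.one_apply]

/-- On the `m`-th chaos the correlation form has norm at most `s ^ m`, where `s` bounds the operator
norm of `U Vᵀ`. Integrating by parts, `m 𝔼[P(Ux)Q(Vx)] = ∑ᵢ 𝔼[∂ᵢP(Ux) (U Vᵀ ∇Q)ᵢ(Vx)]`, and the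
gradients lie in the chaos of order `m - 1`. -/
lemma cB_bound {d : ℕ} (U V : Matrix (Fin 2) (Fin d) ℝ) (hU : U * U.transpose = 1)
    (hV : V * V.transpose = 1) {s : ℝ} (hs : 0 < s)
    (hM : ∀ v : Fin 2 → ℝ, ∑ i, ((U * V.transpose).mulVec v) i ^ 2 ≤ s ^ 2 * ∑ i, v i ^ 2)
    (m : ℕ) : ∀ P Q : MvPolynomial (Fin 2) ℝ, ou P = (m : ℝ) • P → ou Q = (m : ℝ) • Q →
      2 * cB U V P Q ≤ s ^ m * (gE 2 (P * P) + gE 2 (Q * Q)) := by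
  induction m with
  | zero =>
    intro P Q _ _
    have h := gE_nonneg ((pb U P - pb V Q) * (pb U P - pb V Q))
      (fun x => by rw [map_mul]; exact mul_self_nonneg _)
    have e : (pb U P - pb V Q) * (pb U P - pb V Q)
        = pb U (P * P) + pb V (Q * Q) - (2 : ℝ) • (pb U P * pb V Q) := by
      simp only [map_mul, two_smul]; ring
    rw [e, map_sub, map_add, gE_pb U hU, gE_pb V hV, map_smul, smul_eq_mul] at h
    simp only [pow_zero, one_mul, cB]
    linarith
  | succ m ih =>
    intro P Q hP hQ
    set R : Fin 2 → MvPolynomial (Fin 2) ℝ :=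
      fun i => ∑ j, (U * V.transpose) i j • MvPolynomial.pderiv j Q with hR
    have hd : ∀ (F : MvPolynomial (Fin 2) ℝ) (i : Fin 2), ou F = ((m + 1 : ℕ) : ℝ) • F →
        ou (MvPolynomial.pderiv i F) = (m : ℝ) • MvPolynomial.pderiv i F := by
      intro F i hF
      rw [ou_pderiv, hF, Derivation.map_smul]
      push_cast
      rw [add_smul, one_smul, add_sub_cancel_right]
    have hRe : ∀ i, ou (R i) = (m : ℝ) • R i := by
      intro i
      simp only [hR]
      rw [ou_sum, Finset.smul_sum]
      refine Finset.sum_congr rfl fun j _ => ?_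
      rw [ou_smul, hd Q j hQ, smul_comm]
    have h1 : ((m + 1 : ℕ) : ℝ) * cB U V P Q = ∑ i, cB U V (MvPolynomial.pderiv i P) (R i) := by
      rw [← cB_smul_left, ← hP, cB_ou_left U V hU]
      refine Finset.sum_congr rfl fun i _ => ?_
      rw [hR, cB_sum_right]
      simp_rw [cB_smul_right]
    have h2 : ∀ i, 2 * cB U V (MvPolynomial.pderiv i P) (R i)
        ≤ s ^ m * (s * gE 2 (MvPolynomial.pderiv i P * MvPolynomial.pderiv i P)
          + s⁻¹ * gE 2 (R i * R i)) := by
      intro i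
      have h := ih (MvPolynomial.pderiv i P) (s⁻¹ • R i) (hd P i hP)
        (by rw [ou_smul, hRe, smul_comm])
      rw [cB_smul_right, smul_mul_smul_comm, map_smul, smul_eq_mul] at h
      have h' := mul_le_mul_of_nonneg_left h hs.le
      calc _ = s * (2 * (s⁻¹ * cB U V (MvPolynomial.pderiv i P) (R i))) := by
            field_simp
        _ ≤ _ := h'
        _ = _ := by field_simp
    have h3 : ∑ i, gE 2 (R i * R i)
        ≤ s ^ 2 * ∑ i, gE 2 (MvPolynomial.pderiv i Q * MvPolynomial.pderiv i Q) := by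
      have h := gE_nonneg (s ^ 2 • ∑ i, MvPolynomial.pderiv i Q * MvPolynomial.pderiv i Q
        - ∑ i, R i * R i) (fun x => by
          have := hM (fun j => MvPolynomial.eval x (MvPolynomial.pderiv j Q))
          simp only [map_sub, MvPolynomial.smul_eval, map_sum, map_mul, hR, sub_nonneg]
          simpa [Matrix.mulVec, dotProduct, sq] using this)
      rw [map_sub, map_smul, map_sum, map_sum, smul_eq_mul] at h
      linarith
    rw [sum_grad Q hQ] at h3
    have h4 : 2 * (((m + 1 : ℕ) : ℝ) * cB U V P Q)
        ≤ s ^ m * (s * (((m + 1 : ℕ) : ℝ) * gE 2 (P * P))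
          + s⁻¹ * (s ^ 2 * (((m + 1 : ℕ) : ℝ) * gE 2 (Q * Q)))) := by
      rw [h1, Finset.mul_sum]
      refine (Finset.sum_le_sum fun i _ => h2 i).trans ?_
      rw [← Finset.mul_sum, Finset.sum_add_distrib, ← Finset.mul_sum, ← Finset.mul_sum,
        sum_grad P hP]
      gcongr
    have h5 : (0 : ℝ) < ((m + 1 : ℕ) : ℝ) := by positivity
    have e : s ^ m * (s * (((m + 1 : ℕ) : ℝ) * gE 2 (P * P))
          + s⁻¹ * (s ^ 2 * (((m + 1 : ℕ) : ℝ) * gE 2 (Q * Q))))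
        = ((m + 1 : ℕ) : ℝ) * (s ^ (m + 1) * (gE 2 (P * P) + gE 2 (Q * Q))) := by
      field_simp
      ring
    rw [e] at h4
    refine le_of_mul_le_mul_left ?_ h5
    linarith

/-! ### Chaos decomposition of polynomials -/

/-- `P` has total degree strictly less than `n`; for `n = 0` this means `P = 0`. -/
def LowDeg (n : ℕ) (P : MvPolynomial (Fin 2) ℝ) : Prop :=
  ∀ a : Fin 2 →₀ ℕ, n ≤ a.degree → MvPolynomial.coeff a P = 0

lemma lowDeg_of_totalDegree {n : ℕ} {P : MvPolynomial (Fin 2) ℝ} (h : P.totalDegree < n) :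
    LowDeg n P := by
  intro a ha
  apply MvPolynomial.coeff_eq_zero_of_totalDegree_lt
  rw [← Finsupp.degree_apply]
  omega

lemma LowDeg.totalDegree_le {n : ℕ} {P : MvPolynomial (Fin 2) ℝ} (h : LowDeg (n + 1) P) :
    P.totalDegree ≤ n := by
  refine Finset.sup_le fun a ha => ?_
  by_contra hlt
  refine MvPolynomial.mem_support_iff.1 ha (h a ?_)
  rw [Finsupp.degree_apply]
  exact not_le.1 hlt

lemma LowDeg.mono {m n : ℕ} (hmn : m ≤ n) {P : MvPolynomial (Fin 2) ℝ} (h : LowDeg m P) :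
    LowDeg n P := fun a ha => h a (hmn.trans ha)

/-- On coefficients, the number operator multiplies by the degree, up to a contribution from
monomials of degree higher by two. -/
lemma coeff_ou (a : Fin 2 →₀ ℕ) (P : MvPolynomial (Fin 2) ℝ) :
    MvPolynomial.coeff a (ou P) = (a.degree : ℝ) * MvPolynomial.coeff a P
      - ∑ i, MvPolynomial.coeff (a + Finsupp.single i 1 + Finsupp.single i 1) P
        * ((a i + 1 + 1) * (a i + 1)) := by
  have h1 : ∀ i, MvPolynomial.coeff a (MvPolynomial.X i * MvPolynomial.pderiv i P)
      = a i * MvPolynomial.coeff a P := by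
    intro i
    rw [MvPolynomial.coeff_X_mul']
    split_ifs with h
    · rw [MvPolynomial.coeff_pderiv]
      have hi : 1 ≤ a i := Nat.one_le_iff_ne_zero.2 (Finsupp.mem_support_iff.1 h)
      have e : a - Finsupp.single i 1 + Finsupp.single i 1 = a := by
        apply tsub_add_cancel_of_le
        simpa using hi
      rw [e]
      simp [Nat.cast_sub hi]
      ring
    · rw [Finsupp.notMem_support_iff.1 h]; simp
  have h2 : ∀ i, MvPolynomial.coeff a (MvPolynomial.pderiv i (MvPolynomial.pderiv i P))
      = MvPolynomial.coeff (a + Finsupp.single i 1 + Finsupp.single i 1) P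
        * ((a i + 1 + 1) * (a i + 1)) := by
    intro i
    rw [MvPolynomial.coeff_pderiv, MvPolynomial.coeff_pderiv]
    simp
    ring
  rw [ou, MvPolynomial.coeff_sum]
  simp_rw [MvPolynomial.coeff_sub, h1, h2, Finset.sum_sub_distrib]
  rw [← Finset.sum_mul, Finsupp.degree_eq_sum]
  push_cast
  rfl

lemma lowDeg_ou_sub {n : ℕ} {P : MvPolynomial (Fin 2) ℝ} (h : LowDeg (n + 1) P) :
    LowDeg n (ou P - (n : ℝ) • P) := by
  intro a ha
  have h2 : ∀ i, MvPolynomial.coeff (a + Finsupp.single i 1 + Finsupp.single i 1) P = 0 := by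
    intro i
    apply h
    simp only [map_add, Finsupp.degree_single]
    omega
  rw [MvPolynomial.coeff_sub, coeff_ou, MvPolynomial.coeff_smul, smul_eq_mul]
  simp_rw [h2]
  rcases ha.eq_or_lt with e | e
  · simp [← e]
  · simp [h a e]

/-- Every polynomial of degree less than `n` is a sum of eigenvectors of the number operator.
Inductively, `(ou - n) P` has lower degree, and `ou - n` is invertible on the eigenspaces of
eigenvalue below `n`, so that `P` can be corrected to an eigenvector of eigenvalue `n`. -/
lemma chaos_decomp (n : ℕ) : ∀ P : MvPolynomial (Fin 2) ℝ, LowDeg n P →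
    ∃ H : ℕ → MvPolynomial (Fin 2) ℝ, (∀ k, ou (H k) = (k : ℝ) • H k) ∧
      (∀ k, LowDeg (k + 1) (H k)) ∧ P = ∑ k ∈ range n, H k := by
  induction n with
  | zero =>
    intro P hP
    refine ⟨fun _ => 0, by simp [ou], by simp [LowDeg], ?_⟩
    ext a
    simpa using hP a (Nat.zero_le _)
  | succ n ih =>
    intro P hP
    obtain ⟨H, hH, hL, hS⟩ := ih _ (lowDeg_ou_sub hP)
    set R : MvPolynomial (Fin 2) ℝ := ∑ k ∈ range n, ((k : ℝ) - n)⁻¹ • H k with hR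
    have hRn : LowDeg (n + 1) R := by
      intro a ha
      rw [hR, MvPolynomial.coeff_sum]
      refine Finset.sum_eq_zero fun k hk => ?_
      rw [MvPolynomial.coeff_smul, hL k a (by have := Finset.mem_range.1 hk; omega), smul_zero]
    have hRo : ou R - (n : ℝ) • R = ∑ k ∈ range n, H k := by
      rw [hR, ou_sum, Finset.smul_sum, ← Finset.sum_sub_distrib]
      refine Finset.sum_congr rfl fun k hk => ?_
      have hk' : (k : ℝ) - n ≠ 0 := by
        have := Finset.mem_range.1 hk
        have : (k : ℝ) < n := by exact_mod_cast this
        linarith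
      rw [ou_smul, hH, smul_comm, ← sub_smul, smul_smul, mul_inv_cancel₀ hk', one_smul]
    refine ⟨fun k => if k < n then ((k : ℝ) - n)⁻¹ • H k else if k = n then P - R else 0,
      ?_, ?_, ?_⟩
    · intro k
      dsimp only
      split_ifs with h1 h2
      · rw [ou_smul, hH, smul_comm]
      · subst h2
        rw [ou_sub, smul_sub]
        rw [← hS] at hRo
        linear_combination (exp := 1) -hRo
      · simp [ou]
    · intro k a ha
      dsimp only
      split_ifs with h1 h2
      · rw [MvPolynomial.coeff_smul, hL k a ha, smul_zero]
      · subst h2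
        rw [MvPolynomial.coeff_sub, hP a ha, hRn a ha, sub_zero]
      · simp
    · rw [Finset.sum_range_succ]
      have e : ∑ k ∈ range n, (if k < n then ((k : ℝ) - n)⁻¹ • H k
          else if k = n then P - R else 0) = R := by
        refine Finset.sum_congr rfl fun k hk => ?_
        rw [if_pos (Finset.mem_range.1 hk)]
      rw [e]
      simp

instance isOpenPos_gauss (d : ℕ) : (_root_.stdGaussian d).IsOpenPosMeasure := by
  have : (gaussianReal 0 1).IsOpenPosMeasure :=
    (gaussianReal_absolutelyContinuous' 0 one_ne_zero).isOpenPosMeasure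
  unfold _root_.stdGaussian
  infer_instance

lemma gE_mul_self_eq_zero {P : MvPolynomial (Fin 2) ℝ} (h : gE 2 (P * P) = 0) : P = 0 := by
  rw [gE_apply, integral_eq_zero_iff_of_nonneg (fun x => by
    rw [map_mul]; exact mul_self_nonneg _) (integrable_poly _)] at h
  have h2 := Continuous.ae_eq_iff_eq (_root_.stdGaussian 2)
    (MvPolynomial.continuous_eval (P * P)) continuous_const |>.1 h
  apply MvPolynomial.funext
  intro x
  have := congrFun h2 x
  rw [map_mul] at this
  rw [map_zero]
  exact mul_self_eq_zero.1 this

/-- Eigenvectors of the number operator lie in the chaos. -/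
lemma inChaos_of_ou {m : ℕ} {P : MvPolynomial (Fin 2) ℝ} (hP : ou P = (m : ℝ) • P)
    (hL : LowDeg (m + 1) P) : InChaos m (fun x => MvPolynomial.eval x P) := by
  refine ⟨⟨P, hL.totalDegree_le, fun _ => rfl⟩, fun R hR => ?_⟩
  obtain ⟨H, hH, -, hS⟩ := chaos_decomp m R (lowDeg_of_totalDegree hR)
  have h : gE 2 (P * R) = 0 := by
    rw [hS, ← cB_one, cB_sum_right]
    exact Finset.sum_eq_zero fun k hk =>
      cB_orth 1 1 (by simp) (by simp) (Finset.mem_range.1 hk).ne' P (H k) hP (hH k)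
  simpa [gE_apply] using h

/-- Elements of the `m`-th chaos are eigenvectors of the number operator. -/
lemma ou_of_inChaos {m : ℕ} {g : (Fin 2 → ℝ) → ℝ} (hg : InChaos m g) :
    ∃ P : MvPolynomial (Fin 2) ℝ, (∀ x, g x = MvPolynomial.eval x P) ∧ LowDeg (m + 1) P ∧
      ou P = (m : ℝ) • P := by
  obtain ⟨⟨P, hd, hP⟩, ho⟩ := hg
  refine ⟨P, hP, lowDeg_of_totalDegree (by omega), ?_⟩
  obtain ⟨H, hH, hL, hS⟩ := chaos_decomp (m + 1) P (lowDeg_of_totalDegree (by omega))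
  have h0 : ∀ k ∈ range m, H k = 0 := by
    intro k hk
    have hk' := Finset.mem_range.1 hk
    apply gE_mul_self_eq_zero
    have h1 : gE 2 (P * H k) = 0 := by
      have := ho (H k) ((hL k).totalDegree_le.trans_lt hk')
      simpa [gE_apply, hP] using this
    rw [← cB_one, hS, cB_sum_left, Finset.sum_eq_single k] at h1
    · rwa [cB_one] at h1
    · intro b _ hb
      exact cB_orth 1 1 (by simp) (by simp) hb _ _ (hH b) (hH k)
    · intro h; exact absurd (Finset.mem_range.2 (by omega)) h
  rw [Finset.sum_range_succ, Finset.sum_eq_zero h0, zero_add] at hS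
  rw [hS, hH]

/-! ### Density of polynomials in the Gaussian `L²` space -/

lemma integrable_exp_linear (c t₀ t₁ : ℝ) :
    Integrable (fun x : Fin 2 → ℝ => Real.exp (c * (t₀ * x 0 + t₁ * x 1)))
      (_root_.stdGaussian 2) := by
  have h := Integrable.fintype_prod (f := fun i (y : ℝ) => Real.exp ((c * ![t₀, t₁] i) * y))
    (μ := fun _ : Fin 2 => gaussianReal 0 1) (fun i => integrable_exp_mul_gaussianReal _)
  refine h.congr (Filter.Eventually.of_forall fun x => ?_)
  simp only [Fin.prod_univ_two, ← Real.exp_add, Matrix.cons_val_zero, Matrix.cons_val_one]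
  congr 1; ring

lemma memLp_exp_abs (t₀ t₁ : ℝ) :
    MemLp (fun x : Fin 2 → ℝ => Real.exp |t₀ * x 0 + t₁ * x 1|) 2 (_root_.stdGaussian 2) := by
  have hc : Continuous (fun x : Fin 2 → ℝ => Real.exp |t₀ * x 0 + t₁ * x 1|) := by fun_prop
  rw [memLp_two_iff_integrable_sq hc.aestronglyMeasurable]
  refine ((integrable_exp_linear 2 t₀ t₁).add (integrable_exp_linear (-2) t₀ t₁)).mono'
    (hc.pow 2).aestronglyMeasurable (Filter.Eventually.of_forall fun x => ?_)
  rw [Real.norm_of_nonneg (by positivity), ← Real.exp_nat_mul]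
  simp only [Pi.add_apply]
  rcases abs_cases (t₀ * x 0 + t₁ * x 1) with ⟨h, -⟩ | ⟨h, -⟩ <;> rw [h]
  · push_cast
    linarith [Real.exp_pos (-2 * (t₀ * x 0 + t₁ * x 1))]
  · have : ((2 : ℕ) : ℝ) * -(t₀ * x 0 + t₁ * x 1) = -2 * (t₀ * x 0 + t₁ * x 1) := by
      push_cast; ring
    rw [this]
    linarith [Real.exp_pos (2 * (t₀ * x 0 + t₁ * x 1))]

lemma memLp_poly (P : MvPolynomial (Fin 2) ℝ) :
    MemLp (fun x => MvPolynomial.eval x P) 2 (_root_.stdGaussian 2) := by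
  rw [memLp_two_iff_integrable_sq (MvPolynomial.continuous_eval P).aestronglyMeasurable]
  have h := integrable_poly (P ^ 2)
  simp only [map_pow] at h
  exact h

/-- If `r` is orthogonal to all polynomials, the Fourier transform of `r · γ` vanishes: expand the
exponential and integrate termwise, which is legitimate since `|r| e^{|⟨t, x⟩|}` is integrable. -/
lemma gauss_fourier_zero {r : (Fin 2 → ℝ) → ℝ} (hm : Measurable r)
    (hr : MemLp r 2 (_root_.stdGaussian 2))
    (h0 : ∀ P : MvPolynomial (Fin 2) ℝ,
      ∫ x, r x * MvPolynomial.eval x P ∂_root_.stdGaussian 2 = 0) (t₀ t₁ : ℝ) :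
    ∫ x, (r x : ℂ) * Complex.exp (((t₀ * x 0 + t₁ * x 1 : ℝ) : ℂ) * Complex.I)
      ∂_root_.stdGaussian 2 = 0 := by
  set ℓ : (Fin 2 → ℝ) → ℝ := fun x => t₀ * x 0 + t₁ * x 1 with hℓ
  have hℓm : Measurable ℓ := by fun_prop
  have hsum := hasSum_integral_of_dominated_convergence (μ := _root_.stdGaussian 2)
    (F := fun (n : ℕ) x => (r x : ℂ) * (((ℓ x : ℂ) * Complex.I) ^ n / (n.factorial : ℂ)))
    (f := fun x => (r x : ℂ) * Complex.exp ((ℓ x : ℂ) * Complex.I))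
    (fun n x => |r x| * (|ℓ x| ^ n / n.factorial))
    (fun n => by
      refine Measurable.aestronglyMeasurable ?_
      fun_prop)
    (fun n => Filter.Eventually.of_forall fun x => by simp)
    (Filter.Eventually.of_forall fun x => (Real.summable_pow_div_factorial _).mul_left _)
    (by
      have h := hr.abs.integrable_mul (memLp_exp_abs t₀ t₁)
      refine h.congr (Filter.Eventually.of_forall fun x => ?_)
      simp only [Pi.mul_apply]
      rw [tsum_mul_left, Real.exp_eq_exp_ℝ, NormedSpace.exp_eq_tsum_div]
      rfl)
    (Filter.Eventually.of_forall fun x => by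
      refine HasSum.mul_left _ ?_
      rw [Complex.exp_eq_exp_ℂ]
      exact NormedSpace.expSeries_div_hasSum_exp _)
  have hz : ∀ n : ℕ, ∫ x, (r x : ℂ) * (((ℓ x : ℂ) * Complex.I) ^ n / (n.factorial : ℂ))
      ∂_root_.stdGaussian 2 = 0 := by
    intro n
    have h1 := h0 ((MvPolynomial.C t₀ * MvPolynomial.X 0
      + MvPolynomial.C t₁ * MvPolynomial.X 1) ^ n)
    have h2 : ∀ x, (r x : ℂ) * (((ℓ x : ℂ) * Complex.I) ^ n / (n.factorial : ℂ))
        = (Complex.I ^ n / (n.factorial : ℂ)) * ((r x * ℓ x ^ n : ℝ) : ℂ) := by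
      intro x; push_cast; ring
    simp_rw [h2]
    rw [integral_const_mul, integral_complex_ofReal]
    simp only [map_pow, map_add, map_mul, MvPolynomial.eval_C, MvPolynomial.eval_X] at h1
    rw [h1]; simp
  simp_rw [hz] at hsum
  exact (hsum.unique hasSum_zero)

/-- Completeness: polynomials have trivial orthogonal complement in `L²` of the Gaussian. The
finite measures `r⁺ · γ` and `r⁻ · γ` have the same characteristic function, hence agree. -/
lemma ae_zero_of_orth {r : (Fin 2 → ℝ) → ℝ} (hm : Measurable r)
    (hr : MemLp r 2 (_root_.stdGaussian 2))
    (h0 : ∀ P : MvPolynomial (Fin 2) ℝ,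
      ∫ x, r x * MvPolynomial.eval x P ∂_root_.stdGaussian 2 = 0) :
    r =ᵐ[_root_.stdGaussian 2] 0 := by
  have hrI : Integrable r (_root_.stdGaussian 2) := hr.integrable (by norm_num)
  have f1 := isFiniteMeasure_withDensity_ofReal hrI.2
  have f2 := isFiniteMeasure_withDensity_ofReal hrI.neg.2
  have heq : (_root_.stdGaussian 2).withDensity (fun x => ENNReal.ofReal (r x))
      = (_root_.stdGaussian 2).withDensity (fun x => ENNReal.ofReal ((-r) x)) := by
    apply Measure.ext_of_charFunDual
    ext L
    rw [charFunDual_apply, charFunDual_apply,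
      integral_withDensity_eq_integral_toReal_smul (by fun_prop) (by simp),
      integral_withDensity_eq_integral_toReal_smul (hm.neg.ennreal_ofReal) (by simp),
      ← sub_eq_zero]
    have hL : ∀ x : Fin 2 → ℝ, L x = L (Pi.single 0 1) * x 0 + L (Pi.single 1 1) * x 1 := by
      intro x
      have : x = x 0 • Pi.single 0 1 + x 1 • (Pi.single 1 1 : Fin 2 → ℝ) := by
        ext i; fin_cases i <;> simp
      conv_lhs => rw [this]
      rw [map_add, map_smul, map_smul, smul_eq_mul, smul_eq_mul]
      ring
    have hb : ∀ s : (Fin 2 → ℝ) → ℝ, Integrable s (_root_.stdGaussian 2) →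
        Integrable (fun x => (ENNReal.ofReal (s x)).toReal • Complex.exp (L x * Complex.I))
        (_root_.stdGaussian 2) := by
      intro s hs
      have h1 : Integrable (fun x => (((s x) ⊔ 0 : ℝ) : ℂ)) (_root_.stdGaussian 2) :=
        hs.pos_part.ofReal
      refine (h1.mul_bdd (c := 1) (g := fun x => Complex.exp (L x * Complex.I)) ?_ ?_).congr ?_
      · exact Continuous.aestronglyMeasurable (by fun_prop)
      · exact Filter.Eventually.of_forall fun x => by
          rw [Complex.norm_exp_ofReal_mul_I]
      · exact Filter.Eventually.of_forall fun x => by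
          simp [ENNReal.toReal_ofReal', Complex.real_smul]
    rw [← integral_sub (hb r hrI) (hb (-r) hrI.neg)]
    have key := gauss_fourier_zero hm hr h0 (L (Pi.single 0 1)) (L (Pi.single 1 1))
    rw [← key]
    congr 1; ext x
    rw [← hL, ← sub_smul, Complex.real_smul, ENNReal.toReal_ofReal', ENNReal.toReal_ofReal']
    congr 2
    rcases le_total 0 (r x) with h | h
    · simp [h]
    · simp [h]
  rw [withDensity_eq_iff (by fun_prop) (hm.neg.ennreal_ofReal).aemeasurable] at heq
  · filter_upwards [heq] with x hx
    have hx' := congrArg ENNReal.toReal hx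
    rw [ENNReal.toReal_ofReal', ENNReal.toReal_ofReal'] at hx'
    simp only [Pi.neg_apply, Pi.zero_apply] at *
    rcases le_total 0 (r x) with h | h
    · rw [max_eq_left h, max_eq_right (by linarith)] at hx'; exact hx'
    · rw [max_eq_right h, max_eq_left (by linarith)] at hx'; linarith
  · exact ne_top_of_le_ne_top hrI.2.ne (lintegral_mono fun x => by
      rw [← ofReal_norm]; exact ENNReal.ofReal_le_ofReal (le_abs_self _))

/-- Polynomials are dense in `L²` of the Gaussian. -/
lemma poly_dense {p : (Fin 2 → ℝ) → ℝ} (hp : MemLp p 2 (_root_.stdGaussian 2)) {ε : ℝ}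
    (hε : 0 < ε) : ∃ P : MvPolynomial (Fin 2) ℝ,
      ∫ x, (p x - MvPolynomial.eval x P) ^ 2 ∂_root_.stdGaussian 2 ≤ ε ^ 2 := by
  let T : MvPolynomial (Fin 2) ℝ →ₗ[ℝ] Lp ℝ 2 (_root_.stdGaussian 2) :=
    { toFun := fun P => (memLp_poly P).toLp
      map_add' := fun P Q => by
        rw [← MemLp.toLp_add]; congr 1; ext x; simp
      map_smul' := fun c P => by
        rw [RingHom.id_apply, ← MemLp.toLp_const_smul]; congr 1; ext x; simp }
  have htop : (LinearMap.range T).topologicalClosure = ⊤ := by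
    rw [Submodule.topologicalClosure_eq_top_iff, Submodule.eq_bot_iff]
    intro f hf
    have hz : (f : (Fin 2 → ℝ) → ℝ) =ᵐ[_root_.stdGaussian 2] 0 := by
      refine ae_zero_of_orth (Lp.stronglyMeasurable f).measurable (Lp.memLp f) fun P => ?_
      have h := (Submodule.mem_orthogonal _ _).1 hf (T P) ⟨P, rfl⟩
      rw [L2.inner_def] at h
      rw [← h]
      refine integral_congr_ae ?_
      filter_upwards [(memLp_poly P).coeFn_toLp] with x hx
      have hx' : (T P : (Fin 2 → ℝ) → ℝ) x = MvPolynomial.eval x P := hx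
      rw [hx']; simp
    exact (Lp.eq_zero_iff_ae_eq_zero).2 hz
  have hmem : hp.toLp ∈ closure (LinearMap.range T : Set (Lp ℝ 2 (_root_.stdGaussian 2))) := by
    rw [← Submodule.topologicalClosure_coe, htop]; trivial
  obtain ⟨_, ⟨P, rfl⟩, hP⟩ := Metric.mem_closure_iff.1 hmem ε hε
  refine ⟨P, ?_⟩
  have h2 : dist (hp.toLp) (T P) ^ 2
      = ∫ x, (p x - MvPolynomial.eval x P) ^ 2 ∂_root_.stdGaussian 2 := by
    rw [dist_eq_norm, ← real_inner_self_eq_norm_sq, L2.inner_def]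
    refine integral_congr_ae ?_
    filter_upwards [(memLp_poly P).coeFn_toLp, hp.coeFn_toLp, Lp.coeFn_sub hp.toLp (T P)]
      with x hx hx2 hx3
    have hx' : (T P : (Fin 2 → ℝ) → ℝ) x = MvPolynomial.eval x P := hx
    rw [hx3, Pi.sub_apply, hx', hx2]
    simp [sq]
  rw [← h2]
  gcongr

/-! ### Correlation bound -/

lemma spec_mulVec (M : Matrix (Fin 2) (Fin 2) ℝ) (v : Fin 2 → ℝ) :
    ∑ i, (M.mulVec v) i ^ 2 ≤ spec M ^ 2 * ∑ i, v i ^ 2 := by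
  have h := (Matrix.toEuclideanCLM (𝕜 := ℝ) M).le_opNorm (WithLp.toLp 2 v)
  rw [Matrix.toEuclideanCLM_toLp] at h
  have h2 := pow_le_pow_left₀ (norm_nonneg _) h 2
  rw [mul_pow, EuclideanSpace.real_norm_sq_eq, EuclideanSpace.real_norm_sq_eq] at h2
  exact h2

/-- `‖U w‖ ≤ ‖w‖` when `U Uᵀ = 1`, by expanding `0 ≤ ‖w - Uᵀ U w‖²`. -/
lemma contraction {d : ℕ} (U : Matrix (Fin 2) (Fin d) ℝ) (hU : U * U.transpose = 1)
    (w : Fin d → ℝ) : ∑ i, (U.mulVec w) i ^ 2 ≤ ∑ k, w k ^ 2 := by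
  set z := U.mulVec w with hz
  have h1 : ∑ k, w k * (U.transpose.mulVec z) k = ∑ i, z i ^ 2 := by
    have : w ⬝ᵥ (U.transpose.mulVec z) = z ⬝ᵥ z := by
      rw [Matrix.dotProduct_mulVec, Matrix.vecMul_transpose]
    simpa [dotProduct, sq] using this
  have h2 := transpose_norm U hU z
  have h3 : 0 ≤ ∑ k, (w k - (U.transpose.mulVec z) k) ^ 2 :=
    Finset.sum_nonneg fun k _ => sq_nonneg _
  have h4 : ∑ k, (w k - (U.transpose.mulVec z) k) ^ 2
      = ∑ k, w k ^ 2 - 2 * ∑ k, w k * (U.transpose.mulVec z) k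
        + ∑ k, (U.transpose.mulVec z) k ^ 2 := by
    rw [Finset.mul_sum, ← Finset.sum_sub_distrib, ← Finset.sum_add_distrib]
    exact Finset.sum_congr rfl fun k _ => by ring
  linarith

lemma spec_le_one {d : ℕ} (U V : Matrix (Fin 2) (Fin d) ℝ) (hU : U * U.transpose = 1)
    (hV : V * V.transpose = 1) : spec (U * V.transpose) ≤ 1 := by
  refine ContinuousLinearMap.opNorm_le_bound _ zero_le_one fun x => ?_
  rw [one_mul]
  refine (sq_le_sq₀ (norm_nonneg _) (norm_nonneg _)).1 ?_
  rw [EuclideanSpace.real_norm_sq_eq, EuclideanSpace.real_norm_sq_eq, ← transpose_norm V hV x.ofLp]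
  refine le_trans (le_of_eq ?_) (contraction U hU _)
  rw [Matrix.mulVec_mulVec]
  rfl

/-- The correlation bound on a single chaos: `𝔼[P(Ux) P(Vx)] ≤ ‖U Vᵀ‖ᵐ 𝔼[P²]`. -/
lemma cB_self_le {d : ℕ} (U V : Matrix (Fin 2) (Fin d) ℝ) (hU : U * U.transpose = 1)
    (hV : V * V.transpose = 1) (m : ℕ) (P : MvPolynomial (Fin 2) ℝ) (hP : ou P = (m : ℝ) • P) :
    cB U V P P ≤ spec (U * V.transpose) ^ m * gE 2 (P * P) := by
  set M := U * V.transpose with hM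
  have hs0 : 0 ≤ spec M := norm_nonneg _
  -- `cB_bound` needs a positive bound, so let `s` decrease to `spec M`.
  have h : ∀ s ∈ Set.Ioi (spec M), cB U V P P ≤ s ^ m * gE 2 (P * P) := by
    intro s hs
    have hs' : spec M < s := hs
    have := cB_bound U V hU hV (hs0.trans_lt hs') (fun v => (spec_mulVec M v).trans (by
      have : 0 ≤ ∑ i, v i ^ 2 := Finset.sum_nonneg fun k _ => sq_nonneg _
      gcongr)) m P P hP hP
    linarith
  have hc : Filter.Tendsto (fun s : ℝ => s ^ m * gE 2 (P * P))
      (nhdsWithin (spec M) (Set.Ioi (spec M))) (nhds (spec M ^ m * gE 2 (P * P))) :=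
    Filter.Tendsto.mono_left (Continuous.tendsto (by fun_prop) _) nhdsWithin_le_nhds
  exact ge_of_tendsto hc (eventually_mem_nhdsWithin.mono h)

/-- Young's inequality for the correlation of two square-integrable functions: `U x` and `V x` are
both standard Gaussian, so only the second moments of `f` and `g` enter. -/
lemma corr_le {d : ℕ} (U V : Matrix (Fin 2) (Fin d) ℝ) (hU : U * U.transpose = 1)
    (hV : V * V.transpose = 1) {f g : (Fin 2 → ℝ) → ℝ} (hf : MemLp f 2 (_root_.stdGaussian 2))
    (hg : MemLp g 2 (_root_.stdGaussian 2)) {t A B : ℝ} (ht : 0 < t)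
    (hA : ∫ x, f x ^ 2 ∂_root_.stdGaussian 2 ≤ A) (hB : ∫ x, g x ^ 2 ∂_root_.stdGaussian 2 ≤ B) :
    2 * ∫ x, f (U.mulVec x) * g (V.mulVec x) ∂_root_.stdGaussian d ≤ t * A + t⁻¹ * B := by
  have hmU := mp_mulVec U hU
  have hmV := mp_mulVec V hV
  have eU := integral_map (μ := _root_.stdGaussian d) hmU.measurable.aemeasurable
    (f := fun x => f x ^ 2) (by rw [hmU.map_eq]; exact hf.1.pow 2)
  have eV := integral_map (μ := _root_.stdGaussian d) hmV.measurable.aemeasurable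
    (f := fun x => g x ^ 2) (by rw [hmV.map_eq]; exact hg.1.pow 2)
  rw [hmU.map_eq] at eU
  rw [hmV.map_eq] at eV
  have hf' := hf.comp_measurePreserving hmU
  have hg' := hg.comp_measurePreserving hmV
  have i1 : Integrable (fun x => f (U.mulVec x) ^ 2) (_root_.stdGaussian d) := hf'.integrable_sq
  have i2 : Integrable (fun x => g (V.mulVec x) ^ 2) (_root_.stdGaussian d) := hg'.integrable_sq
  calc 2 * ∫ x, f (U.mulVec x) * g (V.mulVec x) ∂_root_.stdGaussian d
      = ∫ x, 2 * (f (U.mulVec x) * g (V.mulVec x)) ∂_root_.stdGaussian d :=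
        (integral_const_mul _ _).symm
    _ ≤ ∫ x, (t * f (U.mulVec x) ^ 2 + t⁻¹ * g (V.mulVec x) ^ 2) ∂_root_.stdGaussian d := by
        refine integral_mono ((hf'.integrable_mul hg').const_mul 2)
          ((i1.const_mul t).add (i2.const_mul t⁻¹)) fun x => ?_
        have h := mul_nonneg (inv_nonneg.2 ht.le)
          (sq_nonneg (t * f (U.mulVec x) - g (V.mulVec x)))
        have e : t⁻¹ * (t * f (U.mulVec x) - g (V.mulVec x)) ^ 2
            = t * f (U.mulVec x) ^ 2 + t⁻¹ * g (V.mulVec x) ^ 2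
              - 2 * (f (U.mulVec x) * g (V.mulVec x)) := by
          field_simp; ring
        change 2 * (f (U.mulVec x) * g (V.mulVec x)) ≤ _
        linarith
    _ = t * ∫ x, f x ^ 2 ∂_root_.stdGaussian 2 + t⁻¹ * ∫ x, g x ^ 2 ∂_root_.stdGaussian 2 := by
        rw [integral_add (i1.const_mul t) (i2.const_mul t⁻¹), integral_const_mul,
          integral_const_mul, eU, eV]
    _ ≤ _ := by gcongr

theorem stmt5 (d : ℕ) (p : (Fin 2 → ℝ) → ℝ) (hmeas : Measurable p)
    (hL2 : Integrable (fun x => p x ^ 2) (stdGaussian 2))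
    -- `q m` is the orthogonal projection of `p` onto the `m`-th Gaussian chaos `W_m`
    (q : ℕ → (Fin 2 → ℝ) → ℝ)
    (hq : ∀ m, InChaos m (q m))
    (hproj : ∀ m, ∀ s : (Fin 2 → ℝ) → ℝ, InChaos m s →
      ∫ x, (p x - q m x) * s x ∂stdGaussian 2 = 0)
    (U V : Matrix (Fin 2) (Fin d) ℝ)
    (hU : U * U.transpose = 1) (hV : V * V.transpose = 1) :
    ∫ x, p (U.mulVec x) * p (V.mulVec x) ∂stdGaussian d ≤
      ∑' m : ℕ, spec (U * V.transpose) ^ m * ∫ x, q m x ^ 2 ∂stdGaussian 2 := by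
  have hp : MemLp p 2 (_root_.stdGaussian 2) :=
    (memLp_two_iff_integrable_sq hmeas.aestronglyMeasurable).2 hL2
  choose P hqP hPL hPo using fun m => ou_of_inChaos (hq m)
  have hq2 : ∀ m, ∫ x, q m x ^ 2 ∂_root_.stdGaussian 2 = gE 2 (P m * P m) := by
    intro m
    simp [gE_apply, hqP, sq]
  simp_rw [hq2]
  have hpos : ∀ F : MvPolynomial (Fin 2) ℝ, 0 ≤ gE 2 (F * F) := fun F =>
    gE_nonneg _ fun x => by rw [map_mul]; exact mul_self_nonneg _
  set S : ℕ → MvPolynomial (Fin 2) ℝ := fun N => ∑ m ∈ range N, P m with hS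
  set b : ℕ → (Fin 2 → ℝ) → ℝ := fun N x => p x - MvPolynomial.eval x (S N) with hb
  have hbL : ∀ N, MemLp (b N) 2 (_root_.stdGaussian 2) := fun N => hp.sub (memLp_poly _)
  have hpi : ∀ F : MvPolynomial (Fin 2) ℝ,
      Integrable (fun x => p x * MvPolynomial.eval x F) (_root_.stdGaussian 2) :=
    fun F => hp.integrable_mul (memLp_poly F)
  have hpH : ∀ F N, ∫ x, b N x * MvPolynomial.eval x F ∂_root_.stdGaussian 2
      = ∫ x, p x * MvPolynomial.eval x F ∂_root_.stdGaussian 2 - gE 2 (S N * F) := by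
    intro F N
    rw [gE_apply, ← integral_sub (hpi F) (integrable_poly _)]
    congr 1; ext x
    simp only [hb, map_mul]; ring
  -- the remainder is orthogonal to all polynomials of degree less than `N`
  have horth : ∀ N (R : MvPolynomial (Fin 2) ℝ), LowDeg N R →
      ∫ x, b N x * MvPolynomial.eval x R ∂_root_.stdGaussian 2 = 0 := by
    intro N R hR
    obtain ⟨H, hH, hHL, hHS⟩ := chaos_decomp N R hR
    have h1 : ∀ k ∈ range N, ∫ x, b N x * MvPolynomial.eval x (H k) ∂_root_.stdGaussian 2 = 0 := by
      intro k hk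
      have h2 := hproj k _ (inChaos_of_ou (hH k) (hHL k))
      have h3 : ∫ x, p x * MvPolynomial.eval x (H k) ∂_root_.stdGaussian 2
          = gE 2 (P k * H k) := by
        rw [gE_apply, ← sub_eq_zero, ← integral_sub (hpi _) (integrable_poly _), ← h2]
        congr 1; ext x
        rw [hqP, map_mul]; ring
      rw [hpH, h3, ← cB_one, ← cB_one, hS, cB_sum_left, Finset.sum_eq_single k, sub_self]
      · intro j _ hj
        exact cB_orth 1 1 (by simp) (by simp) hj _ _ (hPo j) (hH k)
      · intro h; exact absurd hk h
    rw [hHS]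
    simp_rw [map_sum, Finset.mul_sum]
    have i : ∀ k ∈ range N, Integrable (fun x => b N x * MvPolynomial.eval x (H k))
        (_root_.stdGaussian 2) := fun k _ => (hbL N).integrable_mul (memLp_poly (H k))
    rw [integral_finsetSum _ i]
    exact Finset.sum_eq_zero h1
  have hSL : ∀ N, LowDeg N (S N) := by
    intro N a ha
    rw [hS, MvPolynomial.coeff_sum]
    exact Finset.sum_eq_zero fun k hk => hPL k a (by have := Finset.mem_range.1 hk; omega)
  -- Pythagoras: `S N` is the best approximation of `p` among polynomials of degree less than `N`
  have hpyth : ∀ N (R : MvPolynomial (Fin 2) ℝ), LowDeg N R →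
      ∫ x, (p x - MvPolynomial.eval x R) ^ 2 ∂_root_.stdGaussian 2
        = ∫ x, b N x ^ 2 ∂_root_.stdGaussian 2 + gE 2 ((S N - R) * (S N - R)) := by
    intro N R hR
    have hd : LowDeg N (S N - R) := fun a ha => by
      rw [MvPolynomial.coeff_sub, hSL N a ha, hR a ha, sub_zero]
    have h0 := horth N _ hd
    have i1 : Integrable (fun x => b N x ^ 2) (_root_.stdGaussian 2) := (hbL N).integrable_sq
    have i2 : Integrable (fun x => b N x * MvPolynomial.eval x (S N - R)) (_root_.stdGaussian 2) :=
      (hbL N).integrable_mul (memLp_poly _)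
    have e : ∀ x, (p x - MvPolynomial.eval x R) ^ 2
        = (b N x ^ 2 + 2 * (b N x * MvPolynomial.eval x (S N - R)))
          + MvPolynomial.eval x ((S N - R) * (S N - R)) := by
      intro x; simp only [hb, map_sub, map_mul]; ring
    simp_rw [e]
    have i3 : Integrable (fun x => b N x ^ 2 + 2 * (b N x * MvPolynomial.eval x (S N - R)))
        (_root_.stdGaussian 2) := i1.add (i2.const_mul 2)
    rw [integral_add i3 (integrable_poly _),
      integral_add i1 (i2.const_mul 2), integral_const_mul, h0, gE_apply]
    ring
  set C := ∫ x, p x ^ 2 ∂_root_.stdGaussian 2 with hC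
  have hSC : ∀ N, gE 2 (S N * S N) ≤ C := by
    intro N
    have h := hpyth N 0 (fun a _ => by simp)
    simp only [map_zero, sub_zero] at h
    have : 0 ≤ ∫ x, b N x ^ 2 ∂_root_.stdGaussian 2 := integral_nonneg fun x => sq_nonneg _
    linarith
  have hC0 : 0 ≤ C := (hpos _).trans (hSC 0)
  have hdiag : ∀ {e : ℕ} (U V : Matrix (Fin 2) (Fin e) ℝ), U * U.transpose = 1 →
      V * V.transpose = 1 → ∀ N, cB U V (S N) (S N) = ∑ m ∈ range N, cB U V (P m) (P m) := by
    intro e U V hU hV N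
    conv_lhs => rw [hS]
    rw [cB_sum_left]
    refine Finset.sum_congr rfl fun m hm => ?_
    rw [cB_sum_right, Finset.sum_eq_single m]
    · intro k _ hk
      exact cB_orth U V hU hV hk.symm _ _ (hPo m) (hPo k)
    · intro h; exact absurd hm h
  set σ := spec (U * V.transpose) with hσ
  have hσ0 : 0 ≤ σ := norm_nonneg _
  have hσ1 : σ ≤ 1 := spec_le_one U V hU hV
  have hbessel : Summable fun m => gE 2 (P m * P m) := by
    refine summable_of_sum_range_le (c := C) (fun m => hpos _) fun N => ?_
    have h := hdiag (1 : Matrix (Fin 2) (Fin 2) ℝ) 1 (by simp) (by simp) N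
    simp_rw [cB_one] at h
    rw [← h]; exact hSC N
  have hsum : Summable fun m => σ ^ m * gE 2 (P m * P m) :=
    hbessel.of_nonneg_of_le (fun m => mul_nonneg (pow_nonneg hσ0 m) (hpos _))
      fun m => mul_le_of_le_one_left (hpos _) (pow_le_one₀ hσ0 hσ1)
  set T := ∑' m, σ ^ m * gE 2 (P m * P m) with hT
  have hmain : ∀ N, cB U V (S N) (S N) ≤ T := by
    intro N
    rw [hdiag U V hU hV N]
    exact (Finset.sum_le_sum fun m _ => cB_self_le U V hU hV m (P m) (hPo m)).trans
      (hsum.sum_le_tsum _ fun m _ => mul_nonneg (pow_nonneg hσ0 m) (hpos _))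
  have hfin : ∀ e : ℝ, 0 < e →
      ∫ x, p (U.mulVec x) * p (V.mulVec x) ∂_root_.stdGaussian d ≤ T + e * (C + 1) + e ^ 2 := by
    intro e he
    -- some polynomial `R` approximates `p` up to `e`, and `S N` with `N > deg R` does no worse
    obtain ⟨R, hR⟩ := poly_dense hp he
    set N := R.totalDegree + 1 with hN
    have hbN : ∫ x, b N x ^ 2 ∂_root_.stdGaussian 2 ≤ e ^ 2 := by
      have h := hpyth N R (lowDeg_of_totalDegree (by omega))
      have := hpos (S N - R)
      linarith
    have hSN : ∫ x, (MvPolynomial.eval x (S N)) ^ 2 ∂_root_.stdGaussian 2 ≤ C := by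
      have := hSC N
      simpa [gE_apply, sq] using this
    -- the weights `e` and `e⁻¹` balance `𝔼[(S N)²] ≤ C` against `𝔼[(b N)²] ≤ e ^ 2`
    have a1 := corr_le U V hU hV (memLp_poly (S N)) (hbL N) he hSN hbN
    have a2 := corr_le U V hU hV (hbL N) (memLp_poly (S N)) (inv_pos.2 he) hbN hSN
    have a3 := corr_le U V hU hV (hbL N) (hbL N) one_pos hbN hbN
    have hmU := mp_mulVec U hU
    have hmV := mp_mulVec V hV
    have ji : ∀ {f g : (Fin 2 → ℝ) → ℝ}, MemLp f 2 (_root_.stdGaussian 2) →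
        MemLp g 2 (_root_.stdGaussian 2) →
        Integrable (fun x => f (U.mulVec x) * g (V.mulVec x)) (_root_.stdGaussian d) :=
      fun hf hg => (hf.comp_measurePreserving hmU).integrable_mul
        (hg.comp_measurePreserving hmV)
    have ex : ∫ x, p (U.mulVec x) * p (V.mulVec x) ∂_root_.stdGaussian d
        = cB U V (S N) (S N)
          + ∫ x, MvPolynomial.eval (U.mulVec x) (S N) * b N (V.mulVec x) ∂_root_.stdGaussian d
          + ∫ x, b N (U.mulVec x) * MvPolynomial.eval (V.mulVec x) (S N) ∂_root_.stdGaussian d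
          + ∫ x, b N (U.mulVec x) * b N (V.mulVec x) ∂_root_.stdGaussian d := by
      have k1 := ji (memLp_poly (S N)) (memLp_poly (S N))
      have k2 := ji (memLp_poly (S N)) (hbL N)
      have k3 := ji (hbL N) (memLp_poly (S N))
      have k4 := ji (hbL N) (hbL N)
      rw [cB, gE_apply]
      simp_rw [map_mul, eval_pb]
      have k12 : Integrable (fun x =>
          MvPolynomial.eval (U.mulVec x) (S N) * MvPolynomial.eval (V.mulVec x) (S N)
          + MvPolynomial.eval (U.mulVec x) (S N) * b N (V.mulVec x)) (_root_.stdGaussian d) :=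
        k1.add k2
      have k123 : Integrable (fun x =>
          MvPolynomial.eval (U.mulVec x) (S N) * MvPolynomial.eval (V.mulVec x) (S N)
          + MvPolynomial.eval (U.mulVec x) (S N) * b N (V.mulVec x)
          + b N (U.mulVec x) * MvPolynomial.eval (V.mulVec x) (S N)) (_root_.stdGaussian d) :=
        k12.add k3
      rw [← integral_add k1 k2, ← integral_add k12 k3, ← integral_add k123 k4]
      congr 1; ext x
      simp only [hb]; ring
    have e1 : e⁻¹ * e ^ 2 = e := by field_simp
    rw [e1] at a1
    rw [inv_inv, e1] at a2
    rw [ex]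
    have := hmain N
    linarith
  -- let `e` tend to zero
  have hlim : Filter.Tendsto (fun e : ℝ => T + e * (C + 1) + e ^ 2)
      (nhdsWithin 0 (Set.Ioi 0)) (nhds (T + 0 * (C + 1) + 0 ^ 2)) :=
    Filter.Tendsto.mono_left (Continuous.tendsto (by fun_prop) _) nhdsWithin_le_nhds
  have := ge_of_tendsto hlim (eventually_mem_nhdsWithin.mono hfin)
  simpa using this
end

section
/- Let k ≥ 1 and let f : ℝ² → ℝ satisfy E_{x∼N²}[f(x)²] < ∞ and E_{x∼N²}[f(x)·p(x)] = 0 for every polynomial p : ℝ² → ℝ of degree at most k. Let U, V ∈ ℝ^{2×d} be matrices with U Uᵀ = V Vᵀ = I₂. Then E_{x∼N^d}[f(U x) · f(V x)] ≤ ‖U Vᵀ‖₂^{k+1} · E_{x∼N²}[f(x)²]. -/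
/-!
Work in the complex Gaussian spaces `HH n = L²(ℝⁿ, N^n; ℂ)`. Since `A Aᵀ = 1`, the map `x ↦ A x`
sends `N^n` to `N^m`, so `pull A : g ↦ g ∘ A` is an isometry, and
`E[f(Ux) f(Vx)] = ⟪f, T f⟫` with `T = (pull V)† ∘ pull U`, written `noiseOp U V`.

The normalised characters `wave t = exp (|t|²/2 + i t·x)` span a dense subspace, satisfy
`⟪wave s, wave t⟫ = exp (s·t)`, and are mapped to one another by `T`: `T (wave t) = wave (V Uᵀ t)`. With
`M = U Vᵀ` and `σ = ‖M‖`, the self-adjoint operator `S = T† T` therefore satisfies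
`S (wave t) = wave (M Mᵀ t)`, and `Sᵖ (wave t) = wave u` with `|u| ≤ σ^(2p) |t|`.

A function `w` is orthogonal to all polynomials of degree at most `k` if and only if
`⟪wave t, w⟫ = O(exp (|t|²/2) |t|^(k+1))` (`mem_WW_iff`). Hence the orthogonal complement `WW n k` of
these polynomials is `S`-invariant, and `⟪wave t, Sᵖ w⟫ = O(σ^(2(k+1)p))` for `w` in it. This weak
decay, along a total family and with constants depending on `t` and `w`, already forces
`‖S w‖ ≤ σ^(2(k+1)) ‖w‖` on `WW n k` (`opBound_of_weak_decay`), because `p ↦ ‖Sᵖ w‖` is log-convex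
for self-adjoint `S`: a log-convex sequence that is `O(lᵖ)` has first ratio at most `l`.
Consequently `‖T f‖² = ⟪f, S f⟫ ≤ σ^(2(k+1)) ‖f‖²`, and Cauchy–Schwarz concludes. This route needs
neither Hermite polynomials nor a singular value decomposition.
-/

open MeasureTheory ProbabilityTheory Real Finset

/-! ### Characteristic function of the Gaussian -/

instance (n : ℕ) : IsProbabilityMeasure (_root_.stdGaussian n) := by
  unfold _root_.stdGaussian; infer_instance

instance (n : ℕ) : IsGaussian (_root_.stdGaussian n) := by
  have h := isGaussian_map_equiv_iff (μ := _root_.stdGaussian n)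
    (EuclideanSpace.equiv (Fin n) ℝ).symm
  rw [← h]
  have h2 := map_pi_eq_stdGaussian (ι := Fin n)
  have h3 : (_root_.stdGaussian n).map (EuclideanSpace.equiv (Fin n) ℝ).symm
      = ProbabilityTheory.stdGaussian (EuclideanSpace ℝ (Fin n)) := by
    rw [← h2]; rfl
  rw [h3]
  infer_instance

lemma charfun_gauss {n : ℕ} (u : Fin n → ℝ) :
    ∫ x, Complex.exp ((u ⬝ᵥ x : ℝ) * Complex.I) ∂_root_.stdGaussian n
      = Complex.exp (-((u ⬝ᵥ u : ℝ) : ℂ) / 2) := by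
  have h1 : ∀ x : Fin n → ℝ, Complex.exp ((u ⬝ᵥ x : ℝ) * Complex.I)
      = ∏ i, Complex.exp (u i * x i * Complex.I) := by
    intro x
    rw [← Complex.exp_sum, dotProduct]
    push_cast
    rw [Finset.sum_mul]
  simp_rw [h1]
  rw [_root_.stdGaussian, integral_fintype_prod_eq_prod
    (f := fun i (y : ℝ) => Complex.exp (u i * y * Complex.I))]
  simp_rw [← charFun_apply_real, charFun_gaussianReal]
  rw [← Complex.exp_sum, dotProduct]
  congr 1
  push_cast
  rw [neg_div, Finset.sum_div, ← Finset.sum_neg_distrib]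
  refine Finset.sum_congr rfl fun i _ => ?_
  simp
  ring

/-- Finite measures on `Fin n → ℝ` are determined by their characteristic function, written with the
dot product; this avoids passing to `EuclideanSpace`. -/
lemma ext_of_dot {n : ℕ} {P Q : Measure (Fin n → ℝ)} [IsFiniteMeasure P] [IsFiniteMeasure Q]
    (h : ∀ t : Fin n → ℝ, ∫ x, Complex.exp ((t ⬝ᵥ x : ℝ) * Complex.I) ∂P
      = ∫ x, Complex.exp ((t ⬝ᵥ x : ℝ) * Complex.I) ∂Q) : P = Q := by
  refine ext_of_integral_char_eq continuous_probChar probChar_ne_one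
    (L := dotProductBilin ℝ ℝ) (W := Fin n → ℝ) ?_ ?_ ?_
  · intro v hv h0
    have := congrArg (fun l => l v) h0
    simp at this
    exact hv this
  · simp [dotProduct]
    fun_prop
  · intro w
    simpa [BoundedContinuousFunction.char_apply, probChar_apply, dotProduct_comm] using h w

lemma measurePreserving_mulVec {m n : ℕ} (A : Matrix (Fin m) (Fin n) ℝ)
    (hA : A * A.transpose = 1) :
    MeasurePreserving (fun x => A.mulVec x) (_root_.stdGaussian n) (_root_.stdGaussian m) := by
  have hm : Measurable (fun x => A.mulVec x) := by
    exact (Continuous.matrix_mulVec continuous_const continuous_id).measurable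
  refine ⟨hm, ?_⟩
  have : IsProbabilityMeasure ((_root_.stdGaussian n).map (fun x => A.mulVec x)) :=
    Measure.isProbabilityMeasure_map hm.aemeasurable
  refine ext_of_dot fun t => ?_
  rw [integral_map hm.aemeasurable (by 
    apply Continuous.aestronglyMeasurable
    simp only [dotProduct]
    fun_prop)]
  simp_rw [Matrix.dotProduct_mulVec, charfun_gauss]
  rw [← Matrix.dotProduct_mulVec, ← Matrix.mulVec_transpose, Matrix.mulVec_mulVec, hA]
  simp

/-! ### The Gaussian `L²` space and its normalised characters -/

/-- Fourier uniqueness for `g` times the Gaussian: the positive and negative parts of `g` are densities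
of finite measures with equal characteristic functions. -/
lemma ae_zero_of_fourier {n : ℕ} {g : (Fin n → ℝ) → ℝ} (hg : Integrable g (_root_.stdGaussian n))
    (h : ∀ t : Fin n → ℝ,
      ∫ x, (g x : ℂ) * Complex.exp ((t ⬝ᵥ x : ℝ) * Complex.I) ∂_root_.stdGaussian n = 0) :
    g =ᵐ[_root_.stdGaussian n] 0 := by
  have hb : ∀ (t : Fin n → ℝ) {q : (Fin n → ℝ) → ℝ}, Integrable q (_root_.stdGaussian n) →
      Integrable (fun x => (q x : ℂ) * Complex.exp ((t ⬝ᵥ x : ℝ) * Complex.I))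
        (_root_.stdGaussian n) := by
    intro t q hq
    refine hq.ofReal.mul_bdd (c := 1) ?_ ?_
    · apply Continuous.aestronglyMeasurable
      simp only [dotProduct]
      fun_prop
    · exact ae_of_all _ fun x => (Complex.norm_exp_ofReal_mul_I _).le
  have hfin1 := isFiniteMeasure_withDensity_ofReal hg.2
  have hfin2 := isFiniteMeasure_withDensity_ofReal hg.neg.2
  have key : (_root_.stdGaussian n).withDensity (fun x => ENNReal.ofReal (g x))
      = (_root_.stdGaussian n).withDensity (fun x => ENNReal.ofReal ((-g) x)) := by
    refine ext_of_dot fun t => ?_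
    rw [integral_withDensity_eq_integral_toReal_smul₀ hg.1.aemeasurable.ennreal_ofReal (by simp),
      integral_withDensity_eq_integral_toReal_smul₀ hg.neg.1.aemeasurable.ennreal_ofReal (by simp),
      ← sub_eq_zero, ← integral_sub]
    · rw [← h t]
      congr 1
      funext x
      have : (g x : ℂ) = ((max (g x) 0 - max (- g x) 0 : ℝ) : ℂ) := by
        congr 1
        exact (posPart_sub_negPart (g x)).symm
      have h3 : (g x : ℂ) = (max (g x) 0 : ℝ) - (max (- g x) 0 : ℝ) := by
        rw [← Complex.ofReal_sub, ← this]
      rw [h3, sub_mul]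
      simp [ENNReal.toReal_ofReal']
    · simpa [ENNReal.toReal_ofReal'] using hb t hg.pos_part
    · simpa [ENNReal.toReal_ofReal'] using hb t hg.neg_part
  have h2 := (withDensity_eq_iff hg.1.aemeasurable.ennreal_ofReal
    hg.neg.1.aemeasurable.ennreal_ofReal hg.lintegral_lt_top.ne).1 key
  filter_upwards [h2] with x hx
  have h3 := congrArg ENNReal.toReal hx
  simp only [ENNReal.toReal_ofReal', Pi.neg_apply] at h3
  have := posPart_sub_negPart (g x)
  simp only [posPart_def, negPart_def] at this
  simp only [Pi.zero_apply]
  rw [← this]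
  exact sub_eq_zero.2 h3

/-- The complex Gaussian `L²` space in dimension `n`. -/
noncomputable abbrev HH (n : ℕ) := Lp ℂ 2 (_root_.stdGaussian n)

lemma inner_toLp {n : ℕ} {f g : (Fin n → ℝ) → ℂ} (hf : MemLp f 2 (_root_.stdGaussian n))
    (hg : MemLp g 2 (_root_.stdGaussian n)) :
    inner ℂ (hf.toLp f) (hg.toLp g)
      = ∫ x, g x * (starRingEnd ℂ) (f x) ∂_root_.stdGaussian n := by
  rw [L2.inner_def]
  refine integral_congr_ae ?_
  filter_upwards [hf.coeFn_toLp, hg.coeFn_toLp] with x h1 h2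
  rw [h1, h2]
  rfl

/-- The character `x ↦ exp (i t·x)`, multiplied by `exp (|t|²/2)` so that the Gaussian inner products
become `exp (s·t)`. -/
noncomputable def waveFun {n : ℕ} (t x : Fin n → ℝ) : ℂ :=
  Complex.exp (((t ⬝ᵥ t : ℝ) : ℂ) / 2) * Complex.exp ((t ⬝ᵥ x : ℝ) * Complex.I)

lemma norm_waveFun {n : ℕ} (t x : Fin n → ℝ) : ‖waveFun t x‖ = Real.exp ((t ⬝ᵥ t) / 2) := by
  rw [waveFun, norm_mul, Complex.norm_exp_ofReal_mul_I, mul_one, Complex.norm_exp]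
  simp

lemma memLp_waveFun {n : ℕ} (t : Fin n → ℝ) : MemLp (waveFun t) 2 (_root_.stdGaussian n) := by
  refine MemLp.of_bound ?_ (Real.exp ((t ⬝ᵥ t) / 2)) (ae_of_all _ fun x => (norm_waveFun t x).le)
  apply Continuous.aestronglyMeasurable
  unfold waveFun
  simp only [dotProduct]
  fun_prop

/-- The class of `waveFun t` in `L²`. -/
noncomputable def wave {n : ℕ} (t : Fin n → ℝ) : HH n := (memLp_waveFun t).toLp _

lemma inner_wave {n : ℕ} (s t : Fin n → ℝ) :
    inner ℂ (wave s) (wave t) = Complex.exp ((s ⬝ᵥ t : ℝ)) := by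
  rw [wave, wave, inner_toLp]
  have h : ∀ x, waveFun t x * (starRingEnd ℂ) (waveFun s x)
      = Complex.exp (((t ⬝ᵥ t : ℝ) : ℂ) / 2 + ((s ⬝ᵥ s : ℝ) : ℂ) / 2)
        * Complex.exp (((t - s) ⬝ᵥ x : ℝ) * Complex.I) := by
    intro x
    simp only [waveFun, ← Complex.exp_conj, ← Complex.exp_add, sub_dotProduct]
    congr 1
    simp [map_ofNat]
    ring
  simp_rw [h]
  rw [integral_const_mul, charfun_gauss, ← Complex.exp_add]
  congr 1
  simp only [sub_dotProduct, dotProduct_sub, dotProduct_comm t s]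
  push_cast
  ring

/-- The characters span a dense subspace. Real and imaginary parts of a function orthogonal to all
of them are treated separately, using the conjugate relation at `-t`. -/
lemma wave_total (n : ℕ) :
    (Submodule.span ℂ (Set.range (wave (n := n)))).topologicalClosure = ⊤ := by
  rw [Submodule.topologicalClosure_eq_top_iff, Submodule.eq_bot_iff]
  intro f hf
  rw [Submodule.mem_orthogonal] at hf
  have h0 : ∀ t : Fin n → ℝ, ∫ x, f x * Complex.exp ((t ⬝ᵥ x : ℝ) * Complex.I)
      ∂_root_.stdGaussian n = 0 := by
    intro t
    have h1 := hf (wave (-t)) (Submodule.subset_span ⟨_, rfl⟩)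
    have h2 := inner_toLp (memLp_waveFun (-t)) (Lp.memLp f)
    rw [Lp.toLp_coeFn] at h2
    rw [wave, h2] at h1
    have h : ∀ x, f x * (starRingEnd ℂ) (waveFun (-t) x)
      = Complex.exp (((t ⬝ᵥ t : ℝ) : ℂ) / 2)
        * (f x * Complex.exp ((t ⬝ᵥ x : ℝ) * Complex.I)) := by
      intro x
      simp only [waveFun, map_mul, ← Complex.exp_conj, map_div₀, Complex.conj_ofReal,
        Complex.conj_I, neg_dotProduct, dotProduct_neg, map_ofNat]
      simp
      ring
    simp_rw [h] at h1
    rw [integral_const_mul] at h1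
    exact (mul_eq_zero.1 h1).resolve_left (Complex.exp_ne_zero _)
  have hfi : Integrable f (_root_.stdGaussian n) := (Lp.memLp f).integrable (by norm_num)
  have hint : ∀ t : Fin n → ℝ, Integrable (fun x => f x * Complex.exp ((t ⬝ᵥ x : ℝ) * Complex.I))
        (_root_.stdGaussian n) := by
    intro t
    refine hfi.mul_bdd (c := 1) ?_ ?_
    · apply Continuous.aestronglyMeasurable
      simp only [dotProduct]
      fun_prop
    · exact ae_of_all _ fun x => (Complex.norm_exp_ofReal_mul_I _).le
  have h0c : ∀ t : Fin n → ℝ,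
      ∫ x, (starRingEnd ℂ) (f x) * Complex.exp ((t ⬝ᵥ x : ℝ) * Complex.I)
      ∂_root_.stdGaussian n = 0 := by
    intro t
    have := congrArg (starRingEnd ℂ) (h0 (-t))
    rw [← integral_conj] at this
    simpa [← Complex.exp_conj] using this
  have hintc : ∀ t : Fin n → ℝ,
      Integrable (fun x => (starRingEnd ℂ) (f x) * Complex.exp ((t ⬝ᵥ x : ℝ) * Complex.I))
        (_root_.stdGaussian n) := by
    intro t
    have := (Complex.conjLIE.toContinuousLinearEquiv.toContinuousLinearMap).integrable_comp
      (hint (-t))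
    refine this.congr (ae_of_all _ fun x => ?_)
    simp [← Complex.exp_conj]
  have hre : (fun x => (f x).re) =ᵐ[_root_.stdGaussian n] 0 := by
    refine ae_zero_of_fourier hfi.re fun t => ?_
    have : ∀ x, (((f x).re : ℝ) : ℂ) * Complex.exp ((t ⬝ᵥ x : ℝ) * Complex.I)
        = (1 / 2) * (f x * Complex.exp ((t ⬝ᵥ x : ℝ) * Complex.I)
          + (starRingEnd ℂ) (f x) * Complex.exp ((t ⬝ᵥ x : ℝ) * Complex.I)) := by
      intro x
      rw [Complex.re_eq_add_conj]
      ring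
    simp_rw [this]
    rw [integral_const_mul, integral_add (hint t) (hintc t), h0, h0c]
    simp
  have him : (fun x => (f x).im) =ᵐ[_root_.stdGaussian n] 0 := by
    refine ae_zero_of_fourier hfi.im fun t => ?_
    have : ∀ x, (((f x).im : ℝ) : ℂ) * Complex.exp ((t ⬝ᵥ x : ℝ) * Complex.I)
        = (1 / (2 * Complex.I)) * (f x * Complex.exp ((t ⬝ᵥ x : ℝ) * Complex.I)
          - (starRingEnd ℂ) (f x) * Complex.exp ((t ⬝ᵥ x : ℝ) * Complex.I)) := by
      intro x
      rw [Complex.im_eq_sub_conj]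
      ring
    simp_rw [this]
    rw [integral_const_mul, integral_sub (hint t) (hintc t), h0, h0c]
    simp
  rw [Lp.eq_zero_iff_ae_eq_zero]
  filter_upwards [hre, him] with x h1 h2
  exact Complex.ext h1 h2

/-! ### Log-convexity and elementary estimates -/

/-- A log-convex sequence that is `O(l ^ n)` has first ratio at most `l`: the ratios of consecutive
terms are nondecreasing, so a larger first ratio would force faster geometric growth. -/
lemma logconvex_bound (a : ℕ → ℝ) (ha : ∀ n, 0 ≤ a n) (hc : ∀ n, a (n + 1) ^ 2 ≤ a n * a (n + 2))
    {C l : ℝ} (hl : 0 ≤ l) (hb : ∀ n, a n ≤ C * l ^ n) : a 1 ≤ l * a 0 := by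
  by_contra! hlt
  have h0 : 0 < a 0 := by
    rcases (ha 0).lt_or_eq with h | h
    · exact h
    · have := hc 0
      rw [← h] at this hlt
      nlinarith
  set r := a 1 / a 0 with hr
  have hlr : l < r := by rw [hr, lt_div_iff₀ h0]; exact hlt
  have hr0 : 0 < r := hl.trans_lt hlr
  have hstep : ∀ n, 0 < a n ∧ r * a n ≤ a (n + 1) := by
    intro n
    induction n with
    | zero => exact ⟨h0, by rw [hr, div_mul_cancel₀ _ h0.ne']⟩
    | succ n ih =>
      obtain ⟨hp, hs⟩ := ih
      have hp1 : 0 < a (n + 1) := lt_of_lt_of_le (by positivity) hs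
      refine ⟨hp1, ?_⟩
      have h1 : a n * (r * a (n + 1)) ≤ a n * a (n + 2) := by
        have := hc n
        nlinarith
      exact le_of_mul_le_mul_left h1 hp
  have hgeo : ∀ n, r ^ n * a 0 ≤ a n := by
    intro n
    induction n with
    | zero => simp
    | succ n ih =>
      calc r ^ (n + 1) * a 0 = r * (r ^ n * a 0) := by ring
        _ ≤ r * a n := by gcongr
        _ ≤ _ := (hstep n).2
  rcases hl.lt_or_eq with hl | hl
  · have h1 : 1 < r / l := by rw [lt_div_iff₀ hl]; linarith
    obtain ⟨n, hn⟩ := pow_unbounded_of_one_lt (C / a 0) h1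
    have h2 := (hgeo n).trans (hb n)
    rw [div_pow, div_lt_div_iff₀ h0 (by positivity)] at hn
    linarith
  · have h2 := (hgeo 1).trans (hb 1)
    rw [← hl] at h2
    simp at h2
    nlinarith

/-- A symmetric operator preserving `W` has norm at most `l` on `W` as soon as `⟪E i, Sⁿ w⟫ = O(lⁿ)` for
each `w ∈ W` and each member `E i` of a total family, with no uniformity in `w` or `i`. -/
lemma opBound_of_weak_decay {H ι : Type*} [NormedAddCommGroup H] [InnerProductSpace ℂ H]
    [CompleteSpace H] (S : H →L[ℂ] H) (hS : ∀ x y, inner ℂ (S x) y = inner ℂ x (S y))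
    (W : Submodule ℂ H) [W.HasOrthogonalProjection] (hW : ∀ w ∈ W, S w ∈ W) (E : ι → H)
    (hE : (Submodule.span ℂ (Set.range E)).topologicalClosure = ⊤) {l : ℝ} (hl : 0 ≤ l)
    (hd : ∀ w ∈ W, ∀ i, ∃ C : ℝ, ∀ n : ℕ, ‖inner ℂ (E i) ((S ^ n) w)‖ ≤ C * l ^ n)
    (w : H) (hw : w ∈ W) : ‖S w‖ ≤ l * ‖w‖ := by
  have hWn : ∀ n : ℕ, ∀ w ∈ W, (S ^ n) w ∈ W := by
    intro n
    induction n with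
    | zero => intro w hw; simpa using hw
    | succ n ih => intro w hw; rw [pow_succ']; exact hW _ (ih w hw)
  have hSn : ∀ n : ℕ, ∀ x y, inner ℂ ((S ^ n) x) y = inner ℂ x ((S ^ n) y) := by
    intro n
    induction n with
    | zero => intro x y; simp
    | succ n ih =>
      intro x y
      rw [pow_succ, mul_apply_eq_comp, ih, hS, ← mul_apply_eq_comp,
        ← pow_succ', ← pow_succ]
  have hspan : ∀ g ∈ Submodule.span ℂ (Set.range E), ∀ w ∈ W,
      ∃ C : ℝ, ∀ n : ℕ, ‖inner ℂ g ((S ^ n) w)‖ ≤ C * l ^ n := by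
    intro g hg w hw
    induction hg using Submodule.span_induction with
    | mem x hx => obtain ⟨i, rfl⟩ := hx; exact hd w hw i
    | zero => exact ⟨0, by simp⟩
    | add x y _ _ hx hy =>
      obtain ⟨C, hC⟩ := hx
      obtain ⟨D, hD⟩ := hy
      refine ⟨C + D, fun n => ?_⟩
      rw [inner_add_left, add_mul]
      exact (norm_add_le _ _).trans (add_le_add (hC n) (hD n))
    | smul c x _ hx =>
      obtain ⟨C, hC⟩ := hx
      refine ⟨‖c‖ * C, fun n => ?_⟩
      rw [inner_smul_left, norm_mul, RCLike.norm_conj, mul_assoc]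
      gcongr
      exact hC n
  have hmain : ∀ g ∈ Submodule.span ℂ (Set.range E),
      ‖S (W.starProjection g)‖ ≤ l * ‖W.starProjection g‖ := by
    intro g hg
    set w := W.starProjection g with hwdef
    have hw : w ∈ W := W.starProjection_apply_mem g
    obtain ⟨C, hC⟩ := hspan g hg w hw
    have hsq : ∀ n, ‖(S ^ n) w‖ ^ 2 ≤ C * (l ^ n) ^ 2 := by
      intro n
      have h1 : inner ℂ ((S ^ n) w) ((S ^ n) w) = inner ℂ g ((S ^ (2 * n)) w) := by
        rw [hSn, ← mul_apply_eq_comp, ← pow_add, ← two_mul, hwdef]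
        -- The component of `g` orthogonal to `W` does not see `S ^ (2 * n) w`, which lies in `W`.
        have h2 : inner ℂ (g - W.starProjection g) ((S ^ (2 * n)) (W.starProjection g)) = 0 :=
          W.starProjection_inner_eq_zero _ _ (hWn _ _ hw)
        rw [inner_sub_left, sub_eq_zero] at h2
        exact h2.symm
      have h3 : ‖(S ^ n) w‖ ^ 2 = ‖inner ℂ ((S ^ n) w) ((S ^ n) w)‖ := by
        rw [inner_self_eq_norm_sq_to_K]
        simp
      rw [h3, h1, ← pow_mul, mul_comm n]
      exact hC _
    have hC0 : 0 ≤ C := by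
      have := hsq 0
      simp at this
      exact (sq_nonneg _).trans this
    have := logconvex_bound (fun n => ‖(S ^ n) w‖) (fun n => norm_nonneg _) ?_ (C := √C) hl ?_
    · simpa using this
    · intro n
      have h3 : ‖(S ^ (n + 1)) w‖ ^ 2 = ‖inner ℂ ((S ^ n) w) ((S ^ (n + 2)) w)‖ := by
        have e1 : (S ^ (n + 2)) w = S ((S ^ (n + 1)) w) := by
          rw [show n + 2 = (n + 1) + 1 by ring, pow_succ', mul_apply_eq_comp]
        have e2 : (S ^ (n + 1)) w = S ((S ^ n) w) := by
          rw [pow_succ', mul_apply_eq_comp]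
        rw [e1, ← hS, ← e2, inner_self_eq_norm_sq_to_K]
        simp
      rw [h3]
      exact norm_inner_le_norm _ _
    · intro n
      refine abs_le_of_sq_le_sq' ?_ (by positivity) |>.2
      rw [mul_pow, Real.sq_sqrt hC0]
      exact hsq n
  have hclosed : IsClosed {x : H | ‖S (W.starProjection x)‖ ≤ l * ‖W.starProjection x‖} :=
    isClosed_le (by fun_prop) (by fun_prop)
  have hall : w ∈ closure ((Submodule.span ℂ (Set.range E) : Submodule ℂ H) : Set H) := by
    rw [← Submodule.topologicalClosure_coe, hE]
    trivial
  have : ‖S (W.starProjection w)‖ ≤ l * ‖W.starProjection w‖ :=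
    closure_minimal (fun g hg => hmain g hg) hclosed hall
  simpa [Submodule.starProjection_eq_self_iff.2 hw] using this

/-- A polynomial in `s` of degree less than `k` that is `O(s ^ k)` as `s ↓ 0` vanishes. -/
lemma coeff_zero_of_bound (k : ℕ) : ∀ (c : ℕ → ℂ) (C : ℝ),
    (∀ s : ℝ, 0 < s → s ≤ 1 → ‖∑ j ∈ range k, c j * (s : ℂ) ^ j‖ ≤ C * s ^ k) →
    ∀ j < k, c j = 0 := by
  induction k with
  | zero => intro c C _ j hj; omega
  | succ k ih =>
    intro c C h
    have h0 : c 0 = 0 := by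
      have t1 : Filter.Tendsto (fun s : ℝ => ‖∑ j ∈ range (k + 1), c j * (s : ℂ) ^ j‖)
          (nhdsWithin 0 (Set.Ioi 0)) (nhds ‖∑ j ∈ range (k + 1), c j * ((0 : ℝ) : ℂ) ^ j‖) := by
        apply Filter.Tendsto.mono_left _ nhdsWithin_le_nhds
        apply Continuous.tendsto
          (f := fun s : ℝ => ‖∑ j ∈ range (k + 1), c j * (s : ℂ) ^ j‖)
        fun_prop
      have t2 : Filter.Tendsto (fun s : ℝ => C * s ^ (k + 1))
          (nhdsWithin 0 (Set.Ioi 0)) (nhds (C * 0 ^ (k + 1))) := by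
        apply Filter.Tendsto.mono_left _ nhdsWithin_le_nhds
        apply Continuous.tendsto (f := fun s : ℝ => C * s ^ (k + 1))
        fun_prop
      have := le_of_tendsto_of_tendsto t1 t2 (by
        filter_upwards [Ioc_mem_nhdsGT (zero_lt_one' ℝ)] with s hs using h s hs.1 hs.2)
      rw [Finset.sum_range_succ'] at this
      simpa using this
    have hs := ih (fun j => c (j + 1)) C (by
      intro s hs0 hs1
      have h1 := h s hs0 hs1
      rw [Finset.sum_range_succ', h0] at h1
      have h2 : ∑ j ∈ range k, c (j + 1) * (s : ℂ) ^ (j + 1) + 0 * (s : ℂ) ^ 0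
          = s * ∑ j ∈ range k, c (j + 1) * (s : ℂ) ^ j := by
        rw [Finset.mul_sum, zero_mul, add_zero]
        exact Finset.sum_congr rfl fun j _ => by ring
      rw [h2, norm_mul, Complex.norm_real, Real.norm_of_nonneg hs0.le] at h1
      refine le_of_mul_le_mul_left (h1.trans_eq ?_) hs0
      ring)
    intro j hj
    cases j with
    | zero => exact h0
    | succ j => exact hs j (by omega)

/-- Taylor remainder of `exp (i s)`, of order `|s| ^ m` for every real `s`. The constant `4` is crude:
`e` suffices for `|s| ≤ 1`, and `1 + e`, bounded by `1 + 3`, for `|s| ≥ 1`, where the `j`-th Taylor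
term is at most `|s| ^ m / j!`. -/
lemma exp_taylor_bound (m : ℕ) (s : ℝ) :
    ‖Complex.exp (s * Complex.I) - ∑ j ∈ range m, (s * Complex.I) ^ j / (j.factorial : ℂ)‖
      ≤ 4 * |s| ^ m := by
  have he : Real.exp 1 ≤ 3 := by linarith [Real.exp_one_lt_d9]
  have hn : ‖(s : ℂ) * Complex.I‖ = |s| := by simp
  rcases le_total |s| 1 with hs | hs
  · refine (Complex.norm_exp_sub_sum_le_norm_mul_exp _ m).trans ?_
    rw [hn, mul_comm]
    have : Real.exp |s| ≤ 4 := (Real.exp_le_exp.2 hs).trans (by linarith)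
    gcongr
  · refine (norm_sub_le _ _).trans ?_
    rw [Complex.norm_exp_ofReal_mul_I]
    have h1 : (1 : ℝ) ≤ |s| ^ m := one_le_pow₀ hs
    have h2 : ‖∑ j ∈ range m, ((s : ℂ) * Complex.I) ^ j / (j.factorial : ℂ)‖
        ≤ ∑ j ∈ range m, |s| ^ m * (1 ^ j / (j.factorial : ℝ)) := by
      refine norm_sum_le_of_le _ fun j hj => ?_
      rw [norm_div, norm_pow, hn, Complex.norm_natCast, one_pow, mul_one_div]
      gcongr
      exact (Finset.mem_range.1 hj).le
    rw [← Finset.mul_sum] at h2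
    have h3 := Real.sum_le_exp_of_nonneg (zero_le_one' ℝ) m
    have h4 : |s| ^ m * ∑ j ∈ range m, (1 : ℝ) ^ j / (j.factorial : ℝ) ≤ |s| ^ m * 3 := by
      gcongr
      linarith
    linarith

/-! ### Polynomials of low degree and their orthogonal complement -/

/-- The Euclidean norm of a plain vector; the norm instance on `Fin n → ℝ` is the sup norm. -/
noncomputable def nrm {n : ℕ} (t : Fin n → ℝ) : ℝ := ‖WithLp.toLp 2 t‖

lemma nrm_nonneg {n : ℕ} (t : Fin n → ℝ) : 0 ≤ nrm t := norm_nonneg _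

lemma nrm_smul {n : ℕ} (s : ℝ) (hs : 0 ≤ s) (t : Fin n → ℝ) : nrm (s • t) = s * nrm t := by
  rw [nrm, nrm, WithLp.toLp_smul, norm_smul, Real.norm_of_nonneg hs]

/-- Mixed bound: `nrm t` is Euclidean, while `‖x‖` is the sup norm, hence the crude factor `n`. -/
lemma abs_dot_le {n : ℕ} (t x : Fin n → ℝ) : |t ⬝ᵥ x| ≤ n * nrm t * ‖x‖ := by
  rw [dotProduct]
  refine (Finset.abs_sum_le_sum_abs _ _).trans ?_
  have : ∀ i ∈ (Finset.univ : Finset (Fin n)), |t i * x i| ≤ nrm t * ‖x‖ := by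
    intro i _
    rw [abs_mul]
    exact mul_le_mul (PiLp.norm_apply_le (WithLp.toLp 2 t) i) (norm_le_pi_norm x i)
      (abs_nonneg _) (nrm_nonneg _)
  refine (Finset.sum_le_card_nsmul _ _ _ this).trans_eq ?_
  simp [mul_assoc]

/-- All moments of the Gaussian are finite, by Fernique's theorem. -/
lemma memLp_normPow (n m : ℕ) :
    MemLp (fun x : Fin n → ℝ => ‖x‖ ^ m) 2 (_root_.stdGaussian n) := by
  rw [memLp_two_iff_integrable_sq (by fun_prop)]
  have := (IsGaussian.memLp_id (_root_.stdGaussian n) ((m * 2 : ℕ) : ENNReal)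
    (ENNReal.natCast_ne_top _)).integrable_norm_pow'
  simpa [pow_mul] using this

/-- The polynomial `(t·x)^j`. -/
noncomputable def powFun {n : ℕ} (j : ℕ) (t x : Fin n → ℝ) : ℂ := ((t ⬝ᵥ x : ℝ) : ℂ) ^ j

lemma memLp_powFun {n : ℕ} (j : ℕ) (t : Fin n → ℝ) :
    MemLp (powFun j t) 2 (_root_.stdGaussian n) := by
  refine (memLp_normPow n j).of_le_mul (c := (n * nrm t) ^ j) ?_ (ae_of_all _ fun x => ?_)
  · apply Continuous.aestronglyMeasurable
    unfold powFun
    simp only [dotProduct]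
    fun_prop
  · rw [powFun, norm_pow, Complex.norm_real, norm_pow, norm_norm, ← mul_pow]
    exact pow_le_pow_left₀ (norm_nonneg _) (abs_dot_le t x) _

/-- The class of `powFun j t` in `L²`. -/
noncomputable def powVec {n : ℕ} (j : ℕ) (t : Fin n → ℝ) : HH n := (memLp_powFun j t).toLp _

lemma powVec_smul {n : ℕ} (j : ℕ) (s : ℝ) (t : Fin n → ℝ) :
    powVec j (s • t) = ((s : ℂ) ^ j) • powVec j t := by
  rw [powVec, powVec, ← MemLp.toLp_const_smul]
  congr 1
  funext x
  simp [powFun, mul_pow]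

/-- The Taylor polynomial, with `m` terms, of `x ↦ exp (i t·x)`, as an element of `L²`. -/
noncomputable def taylorVec {n : ℕ} (m : ℕ) (t : Fin n → ℝ) : HH n :=
  ∑ j ∈ range m, (Complex.I ^ j / (j.factorial : ℂ)) • powVec j t

lemma coeFn_taylorVec {n : ℕ} (m : ℕ) (t : Fin n → ℝ) :
    taylorVec m t =ᵐ[_root_.stdGaussian n] fun x =>
      ∑ j ∈ range m, (((t ⬝ᵥ x : ℝ) : ℂ) * Complex.I) ^ j / (j.factorial : ℂ) := by
  unfold taylorVec
  induction m with
  | zero =>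
    simp only [Finset.range_zero, Finset.sum_empty]
    exact Lp.coeFn_zero _ _ _
  | succ m ih =>
    rw [Finset.sum_range_succ]
    refine (Lp.coeFn_add _ _).trans ?_
    filter_upwards [ih, Lp.coeFn_smul (Complex.I ^ m / (m.factorial : ℂ)) (powVec m t),
      (memLp_powFun m t).coeFn_toLp] with x h1 h2 h3
    rw [Pi.add_apply, h1, h2, Pi.smul_apply, Finset.sum_range_succ, powVec, h3, powFun]
    simp [mul_pow]
    ring

/-- The normalisation `exp (|t|²/2)`, which is also the `L²` norm of `wave t`. -/
noncomputable def omg {n : ℕ} (t : Fin n → ℝ) : ℝ := Real.exp ((t ⬝ᵥ t) / 2)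

lemma omg_pos {n : ℕ} (t : Fin n → ℝ) : 0 < omg t := Real.exp_pos _

lemma norm_wave {n : ℕ} (t : Fin n → ℝ) : ‖wave t‖ = omg t := by
  have h : ‖wave t‖ ^ 2 = omg t ^ 2 := by
    have h1 := inner_wave t t
    rw [inner_self_eq_norm_sq_to_K] at h1
    have h2 : ((‖wave t‖ ^ 2 : ℝ) : ℂ) = ((Real.exp (t ⬝ᵥ t) : ℝ) : ℂ) := by
      rw [Complex.ofReal_exp, ← h1]
      simp
    rw [Complex.ofReal_inj.1 h2, omg, ← Real.exp_nat_mul]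
    congr 1
    push_cast
    ring
  exact (sq_eq_sq₀ (norm_nonneg _) (omg_pos t).le).1 h

lemma wave_taylor (n m : ℕ) : ∃ C : ℝ, 0 ≤ C ∧ ∀ t : Fin n → ℝ,
    ‖wave t - (omg t : ℂ) • taylorVec m t‖ ≤ omg t * (C * nrm t ^ m) := by
  refine ⟨4 * n ^ m * ‖(memLp_normPow n m).toLp _‖, by positivity, fun t => ?_⟩
  have h : ‖wave t - (omg t : ℂ) • taylorVec m t‖
      ≤ (omg t * (4 * (n * nrm t) ^ m)) * ‖(memLp_normPow n m).toLp _‖ := by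
    apply Lp.norm_le_mul_norm_of_ae_le_mul
    filter_upwards [Lp.coeFn_sub (wave t) ((omg t : ℂ) • taylorVec m t),
      Lp.coeFn_smul (omg t : ℂ) (taylorVec m t), coeFn_taylorVec m t,
      (memLp_waveFun t).coeFn_toLp, (memLp_normPow n m).coeFn_toLp] with x h1 h2 h3 h4 h5
    rw [h1, Pi.sub_apply, h2, Pi.smul_apply, h3, wave, h4, h5, waveFun, omg, smul_eq_mul]
    have : Complex.exp (((t ⬝ᵥ t : ℝ) : ℂ) / 2) = ((Real.exp (t ⬝ᵥ t / 2) : ℝ) : ℂ) := by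
      simp
    rw [this, ← mul_sub, norm_mul, Complex.norm_real, Real.norm_of_nonneg (Real.exp_pos _).le,
      mul_assoc, norm_pow, norm_norm]
    gcongr
    refine (exp_taylor_bound m _).trans ?_
    rw [mul_assoc, ← mul_pow]
    gcongr
    exact abs_dot_le t x
  refine h.trans_eq ?_
  rw [mul_pow]
  ring

/-- The orthogonal complement of the polynomials of degree at most `k`, these being spanned by the
powers `(t·x)^j` of linear forms with `j ≤ k`. -/
noncomputable def WW (n k : ℕ) : Submodule ℂ (HH n) :=
  (Submodule.span ℂ {p | ∃ j ≤ k, ∃ t, p = powVec j t})ᗮ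

lemma mem_WW {n k : ℕ} {w : HH n} :
    w ∈ WW n k ↔ ∀ j ≤ k, ∀ t, inner ℂ (powVec j t) w = 0 := by
  rw [WW, Submodule.mem_orthogonal]
  constructor
  · intro h j hj t
    exact h _ (Submodule.subset_span ⟨j, hj, t, rfl⟩)
  · intro h u hu
    induction hu using Submodule.span_induction with
    | mem x hx => obtain ⟨j, hj, t, rfl⟩ := hx; exact h j hj t
    | zero => simp
    | add x y _ _ hx hy => rw [inner_add_left, hx, hy, add_zero]
    | smul c x _ hx => rw [inner_smul_left, hx, mul_zero]

/-- Orthogonality to polynomials of degree at most `k` amounts to vanishing to order `k + 1` at `t = 0`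
of `t ↦ ⟪wave t, w⟫`. For the converse the Taylor expansion is restricted to the rays `s • t`. -/
lemma mem_WW_iff {n k : ℕ} {w : HH n} :
    w ∈ WW n k ↔ ∃ D : ℝ, ∀ t, ‖inner ℂ (wave t) w‖ ≤ omg t * (D * nrm t ^ (k + 1)) := by
  obtain ⟨C, hC, hT⟩ := wave_taylor n (k + 1)
  rw [mem_WW]
  constructor
  · intro h
    refine ⟨C * ‖w‖, fun t => ?_⟩
    have h0 : inner ℂ (taylorVec (k + 1) t) w = 0 := by
      rw [taylorVec, sum_inner]
      refine Finset.sum_eq_zero fun j hj => ?_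
      rw [inner_smul_left, h j (by simpa [Nat.lt_succ_iff] using hj), mul_zero]
    have h1 : inner ℂ (wave t) w = inner ℂ (wave t - (omg t : ℂ) • taylorVec (k + 1) t) w := by
      rw [inner_sub_left, inner_smul_left, h0, mul_zero, sub_zero]
    rw [h1]
    refine (norm_inner_le_norm _ _).trans ?_
    refine (mul_le_mul_of_nonneg_right (hT t) (norm_nonneg _)).trans_eq ?_
    ring
  · rintro ⟨D, hD⟩ j hj t
    have key := coeff_zero_of_bound (k + 1)
      (fun j => (starRingEnd ℂ) (Complex.I ^ j / (j.factorial : ℂ)) * inner ℂ (powVec j t) w)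
      ((D + C * ‖w‖) * nrm t ^ (k + 1)) ?_ j (by omega)
    · refine (mul_eq_zero.1 key).resolve_left ?_
      refine (map_ne_zero _).2 ?_
      exact div_ne_zero (pow_ne_zero _ Complex.I_ne_zero) (by exact_mod_cast j.factorial_ne_zero)
    · intro s hs _
      have e1 : ∑ j ∈ range (k + 1), (starRingEnd ℂ) (Complex.I ^ j / (j.factorial : ℂ))
          * inner ℂ (powVec j t) w * (s : ℂ) ^ j = inner ℂ (taylorVec (k + 1) (s • t)) w := by
        rw [taylorVec, sum_inner]
        refine Finset.sum_congr rfl fun j _ => ?_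
        rw [powVec_smul, inner_smul_left, inner_smul_left, map_pow, Complex.conj_ofReal]
        ring
      rw [e1]
      have e2 : (omg (s • t) : ℂ) * inner ℂ (taylorVec (k + 1) (s • t)) w
          = inner ℂ (wave (s • t)) w
            - inner ℂ (wave (s • t) - (omg (s • t) : ℂ) • taylorVec (k + 1) (s • t)) w := by
        rw [inner_sub_left, inner_smul_left, Complex.conj_ofReal]
        ring
      have e3 := congrArg norm e2
      rw [norm_mul, Complex.norm_real, Real.norm_of_nonneg (omg_pos _).le] at e3
      refine le_of_mul_le_mul_left (e3.le.trans ((norm_sub_le _ _).trans ?_)) (omg_pos (s • t))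
      refine (add_le_add (hD _) ((norm_inner_le_norm _ _).trans
        (mul_le_mul_of_nonneg_right (hT _) (norm_nonneg _)))).trans_eq ?_
      rw [nrm_smul s hs.le, mul_pow]
      ring

/-! ### The noise operator -/

lemma eq_of_inner_wave {n : ℕ} {x y : HH n}
    (h : ∀ s, inner ℂ (wave s) x = inner ℂ (wave s) y) : x = y := by
  have h0 := wave_total n
  rw [Submodule.topologicalClosure_eq_top_iff, Submodule.eq_bot_iff] at h0
  refine sub_eq_zero.1 (h0 _ ?_)
  rw [Submodule.mem_orthogonal]
  intro u hu
  induction hu using Submodule.span_induction with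
  | mem x hx => obtain ⟨t, rfl⟩ := hx; rw [inner_sub_right, h, sub_self]
  | zero => simp
  | add x y _ _ hx hy => rw [inner_add_left, hx, hy, add_zero]
  | smul c x _ hx => rw [inner_smul_left, hx, mul_zero]

/-- Composition `g ↦ g ∘ A`, an isometry of Gaussian `L²` spaces when `A Aᵀ = 1`. -/
noncomputable def pull {m n : ℕ} (A : Matrix (Fin m) (Fin n) ℝ)
    (hA : A * A.transpose = 1) : HH m →L[ℂ] HH n :=
  (Lp.compMeasurePreservingₗᵢ ℂ _ (measurePreserving_mulVec A hA)).toContinuousLinearMap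

lemma norm_pull {m n : ℕ} (A : Matrix (Fin m) (Fin n) ℝ) (hA : A * A.transpose = 1) (x : HH m) :
    ‖pull A hA x‖ = ‖x‖ :=
  (Lp.compMeasurePreservingₗᵢ ℂ _ (measurePreserving_mulVec A hA)).norm_map x

lemma pull_toLp {m n : ℕ} (A : Matrix (Fin m) (Fin n) ℝ) (hA : A * A.transpose = 1)
    {g : (Fin m → ℝ) → ℂ} (hg : MemLp g 2 (_root_.stdGaussian m)) :
    pull A hA (hg.toLp g)
      = (hg.comp_measurePreserving (measurePreserving_mulVec A hA)).toLp _ := rfl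

lemma pull_wave {m n : ℕ} (A : Matrix (Fin m) (Fin n) ℝ) (hA : A * A.transpose = 1)
    (t : Fin m → ℝ) : pull A hA (wave t) = wave (A.transpose.mulVec t) := by
  rw [wave, wave, pull_toLp]
  congr 1
  funext x
  have h1 : A.transpose.mulVec t ⬝ᵥ A.transpose.mulVec t = t ⬝ᵥ t := by
    rw [Matrix.mulVec_transpose, ← Matrix.dotProduct_mulVec, ← Matrix.mulVec_transpose,
      Matrix.mulVec_mulVec, hA, Matrix.one_mulVec]
  rw [Function.comp_apply, waveFun, waveFun, h1, Matrix.mulVec_transpose,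
    ← Matrix.dotProduct_mulVec]

/-- The operator `T` with `⟪g, T f⟫ = E[conj (g (V x)) f (U x)]`. -/
noncomputable def noiseOp {m n : ℕ} (U V : Matrix (Fin m) (Fin n) ℝ)
    (hU : U * U.transpose = 1) (hV : V * V.transpose = 1) : HH m →L[ℂ] HH m :=
  (ContinuousLinearMap.adjoint (pull V hV)).comp (pull U hU)

lemma noiseOp_wave {m n : ℕ} (U V : Matrix (Fin m) (Fin n) ℝ)
    (hU : U * U.transpose = 1) (hV : V * V.transpose = 1) (t : Fin m → ℝ) :
    noiseOp U V hU hV (wave t) = wave ((V * U.transpose).mulVec t) := by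
  refine eq_of_inner_wave fun s => ?_
  rw [noiseOp, ContinuousLinearMap.comp_apply, ContinuousLinearMap.adjoint_inner_right,
    pull_wave, pull_wave, inner_wave, inner_wave, Matrix.mulVec_transpose V,
    ← Matrix.dotProduct_mulVec, Matrix.mulVec_mulVec]

lemma inner_noiseOp {m n : ℕ} (U V : Matrix (Fin m) (Fin n) ℝ)
    (hU : U * U.transpose = 1) (hV : V * V.transpose = 1) (x y : HH m) :
    inner ℂ (noiseOp U V hU hV x) y = inner ℂ x (noiseOp V U hV hU y) := by
  rw [noiseOp, noiseOp, ContinuousLinearMap.comp_apply, ContinuousLinearMap.adjoint_inner_left,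
    ContinuousLinearMap.comp_apply, ContinuousLinearMap.adjoint_inner_right]

lemma norm_noiseOp_le {m n : ℕ} (U V : Matrix (Fin m) (Fin n) ℝ)
    (hU : U * U.transpose = 1) (hV : V * V.transpose = 1) (x : HH m) :
    ‖noiseOp U V hU hV x‖ ≤ ‖x‖ := by
  rw [noiseOp, ContinuousLinearMap.comp_apply]
  have h1 : ‖pull V hV‖ ≤ 1 :=
    ContinuousLinearMap.opNorm_le_bound _ zero_le_one fun x => by rw [norm_pull, one_mul]
  rw [← norm_pull U hU x]
  refine (ContinuousLinearMap.le_opNorm _ _).trans ?_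
  rw [LinearIsometryEquiv.norm_map]
  exact mul_le_of_le_one_left (norm_nonneg _) h1

lemma nrm_mulVec_le {n : ℕ} (M : Matrix (Fin n) (Fin n) ℝ) (t : Fin n → ℝ) :
    nrm (M.mulVec t) ≤ spec M * nrm t := by
  have := (Matrix.toEuclideanCLM (𝕜 := ℝ) M).le_opNorm (WithLp.toLp 2 t)
  rwa [Matrix.toEuclideanCLM_toLp] at this

lemma spec_transpose {n : ℕ} (M : Matrix (Fin n) (Fin n) ℝ) : spec M.transpose = spec M := by
  rw [spec, spec, ← Matrix.conjTranspose_eq_transpose_of_trivial, ← Matrix.star_eq_conjTranspose,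
    map_star, ContinuousLinearMap.star_eq_adjoint, LinearIsometryEquiv.norm_map]

lemma spec_nonneg {n : ℕ} (M : Matrix (Fin n) (Fin n) ℝ) : 0 ≤ spec M := norm_nonneg _

/-- An operator that scales the labels of the characters by `σ²` contracts `WW m k` by `σ^(2(k+1))`. -/
lemma contract_of_wave {m : ℕ} (k : ℕ) (S : HH m →L[ℂ] HH m) {σ : ℝ}
    (hsymm : ∀ x y, inner ℂ (S x) y = inner ℂ x (S y)) (hSn : ∀ x, ‖S x‖ ≤ ‖x‖)
    (hone : ∀ t : Fin m → ℝ, ∃ u, S (wave t) = wave u ∧ nrm u ≤ σ ^ 2 * nrm t)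
    (w : HH m) (hw : w ∈ WW m k) : ‖S w‖ ≤ (σ ^ (k + 1)) ^ 2 * ‖w‖ := by
  have hiter : ∀ (p : ℕ) (t : Fin m → ℝ),
      ∃ u, (S ^ p) (wave t) = wave u ∧ nrm u ≤ (σ ^ 2) ^ p * nrm t ∧ omg u ≤ omg t := by
    intro p t
    induction p with
    | zero => exact ⟨t, by simp, by simp, le_rfl⟩
    | succ p ih =>
      obtain ⟨u, h1, h2, h3⟩ := ih
      obtain ⟨v, h4, h5⟩ := hone u
      refine ⟨v, ?_, ?_, ?_⟩
      · rw [pow_succ', mul_apply_eq_comp, h1, h4]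
      · refine h5.trans ?_
        rw [pow_succ' (σ ^ 2), mul_assoc]
        gcongr
      -- The normalisation stays bounded along the iteration because `S` is a contraction.
      · rw [← norm_wave v, ← h4]
        exact (hSn _).trans ((norm_wave u).le.trans h3)
  have hinv : ∀ w ∈ WW m k, S w ∈ WW m k := by
    intro w hw
    obtain ⟨D, hD⟩ := mem_WW_iff.1 hw
    refine mem_WW_iff.2 ⟨|D| * (σ ^ 2) ^ (k + 1), fun t => ?_⟩
    obtain ⟨u, h1, h2, h3⟩ := hiter 1 t
    rw [pow_one] at h1 h2
    rw [← hsymm, h1]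
    refine (hD u).trans ?_
    calc omg u * (D * nrm u ^ (k + 1)) ≤ omg t * (|D| * (σ ^ 2 * nrm t) ^ (k + 1)) := by
          have := nrm_nonneg u
          have := omg_pos t
          have := omg_pos u
          refine (mul_le_mul_of_nonneg_left (mul_le_mul_of_nonneg_right (le_abs_self D)
            (by positivity)) (omg_pos u).le).trans ?_
          gcongr
      _ = _ := by rw [mul_pow]; ring
  have hpow : ∀ p : ℕ, ∀ x y, inner ℂ ((S ^ p) x) y = inner ℂ x ((S ^ p) y) := by
    intro p
    induction p with
    | zero => intro x y; simp
    | succ p ih =>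
      intro x y
      rw [pow_succ, mul_apply_eq_comp, ih, hsymm, ← mul_apply_eq_comp, ← pow_succ', ← pow_succ]
  have : (WW m k).HasOrthogonalProjection := by unfold WW; infer_instance
  refine opBound_of_weak_decay S hsymm (WW m k) hinv wave (wave_total m) (sq_nonneg _) ?_ w hw
  intro w hw t
  obtain ⟨D, hD⟩ := mem_WW_iff.1 hw
  refine ⟨omg t * (|D| * nrm t ^ (k + 1)), fun p => ?_⟩
  obtain ⟨u, h1, h2, h3⟩ := hiter p t
  rw [← hpow, h1]
  refine (hD u).trans ?_
  calc omg u * (D * nrm u ^ (k + 1)) ≤ omg t * (|D| * ((σ ^ 2) ^ p * nrm t) ^ (k + 1)) := by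
        have := nrm_nonneg u
        have := omg_pos t
        have := omg_pos u
        refine (mul_le_mul_of_nonneg_left (mul_le_mul_of_nonneg_right (le_abs_self D)
          (by positivity)) (omg_pos u).le).trans ?_
        gcongr
    _ = _ := by rw [mul_pow]; ring

lemma noiseOp_contract {m n : ℕ} (k : ℕ) (U V : Matrix (Fin m) (Fin n) ℝ)
    (hU : U * U.transpose = 1) (hV : V * V.transpose = 1) (w : HH m) (hw : w ∈ WW m k) :
    ‖noiseOp V U hV hU (noiseOp U V hU hV w)‖
      ≤ (spec (U * V.transpose) ^ (k + 1)) ^ 2 * ‖w‖ := by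
  refine contract_of_wave k ((noiseOp V U hV hU).comp (noiseOp U V hU hV))
    (fun x y => ?_) (fun x => ?_) (fun t => ?_) w hw
  · exact (inner_noiseOp V U hV hU (noiseOp U V hU hV x) y).trans
      (inner_noiseOp U V hU hV x (noiseOp U V hU hV y))
  · exact (norm_noiseOp_le V U hV hU (noiseOp U V hU hV x)).trans (norm_noiseOp_le U V hU hV x)
  · refine ⟨(U * V.transpose).mulVec ((V * U.transpose).mulVec t), ?_, ?_⟩
    · rw [ContinuousLinearMap.comp_apply, noiseOp_wave, noiseOp_wave]
    · refine (nrm_mulVec_le _ _).trans ?_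
      have h1 := nrm_mulVec_le (V * U.transpose) t
      have h2 : spec (V * U.transpose) = spec (U * V.transpose) := by
        rw [← spec_transpose, Matrix.transpose_mul, Matrix.transpose_transpose]
      rw [h2] at h1
      rw [pow_two, mul_assoc]
      exact mul_le_mul_of_nonneg_left h1 (spec_nonneg _)

theorem stmt6 (d k : ℕ) (hk : 1 ≤ k) (f : (Fin 2 → ℝ) → ℝ) (hmeas : Measurable f)
    (hL2 : Integrable (fun x => f x ^ 2) (stdGaussian 2))
    (horth : ∀ P : MvPolynomial (Fin 2) ℝ, P.totalDegree ≤ k →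
      ∫ x, f x * MvPolynomial.eval x P ∂stdGaussian 2 = 0)
    (U V : Matrix (Fin 2) (Fin d) ℝ)
    (hU : U * U.transpose = 1) (hV : V * V.transpose = 1) :
    ∫ x, f (U.mulVec x) * f (V.mulVec x) ∂stdGaussian d ≤
      spec (U * V.transpose) ^ (k + 1) * ∫ x, f x ^ 2 ∂stdGaussian 2 := by
  have hfm : MemLp f 2 (_root_.stdGaussian 2) :=
    (memLp_two_iff_integrable_sq hmeas.aestronglyMeasurable).2 hL2
  have hfc : MemLp (fun x => (f x : ℂ)) 2 (_root_.stdGaussian 2) := hfm.ofReal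
  set F : HH 2 := hfc.toLp _ with hF
  have hFW : F ∈ WW 2 k := by
    rw [mem_WW]
    intro j hj t
    rw [hF, powVec, inner_toLp]
    set P : MvPolynomial (Fin 2) ℝ :=
      (∑ i, MvPolynomial.C (t i) * MvPolynomial.X i) ^ j with hP
    have hdeg : P.totalDegree ≤ k := by
      refine (MvPolynomial.totalDegree_pow _ _).trans ((mul_le_of_le_one_right' ?_).trans hj)
      refine MvPolynomial.totalDegree_finsetSum_le fun i _ => ?_
      refine (MvPolynomial.totalDegree_mul _ _).trans ?_
      simp
    have h := horth P hdeg
    rw [← Complex.ofReal_inj, ← integral_complex_ofReal] at h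
    rw [← Complex.ofReal_zero, ← h]
    congr 1
    funext x
    simp [hP, powFun, dotProduct]
  have hnorm : ‖F‖ ^ 2 = ∫ x, f x ^ 2 ∂_root_.stdGaussian 2 := by
    have h1 : inner ℂ F F = ((∫ x, f x ^ 2 ∂_root_.stdGaussian 2 : ℝ) : ℂ) := by
      rw [hF, inner_toLp, ← integral_complex_ofReal]
      congr 1
      funext x
      simp [pow_two]
    rw [inner_self_eq_norm_sq_to_K] at h1
    exact Complex.ofReal_injective (by simpa using h1)
  have hlhs : ((∫ x, f (U.mulVec x) * f (V.mulVec x) ∂_root_.stdGaussian d : ℝ) : ℂ)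
      = inner ℂ F (noiseOp U V hU hV F) := by
    rw [noiseOp, ContinuousLinearMap.comp_apply, ContinuousLinearMap.adjoint_inner_right, hF,
      pull_toLp, pull_toLp, inner_toLp, ← integral_complex_ofReal]
    congr 1
    funext x
    simp
  have hσ0 := spec_nonneg (U * V.transpose)
  have hT : ‖noiseOp U V hU hV F‖ ≤ spec (U * V.transpose) ^ (k + 1) * ‖F‖ := by
    refine abs_le_of_sq_le_sq' ?_ (by positivity) |>.2
    have h1 : ‖noiseOp U V hU hV F‖ ^ 2
        = ‖inner ℂ F (noiseOp V U hV hU (noiseOp U V hU hV F))‖ := by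
      rw [← inner_noiseOp, inner_self_eq_norm_sq_to_K]
      simp
    rw [h1]
    refine (norm_inner_le_norm _ _).trans ?_
    refine (mul_le_mul_of_nonneg_left (noiseOp_contract k U V hU hV F hFW)
      (norm_nonneg _)).trans_eq ?_
    ring
  calc ∫ x, f (U.mulVec x) * f (V.mulVec x) ∂_root_.stdGaussian d
      ≤ ‖inner ℂ F (noiseOp U V hU hV F)‖ := by
        rw [← hlhs, Complex.norm_real]
        exact Real.le_norm_self _
    _ ≤ ‖F‖ * ‖noiseOp U V hU hV F‖ := norm_inner_le_norm _ _
    _ ≤ ‖F‖ * (spec (U * V.transpose) ^ (k + 1) * ‖F‖) := by gcongr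
    _ = _ := by rw [← hnorm]; ring
end

section
/- Let φ : ℝ → ℝ be non-negative with B₂ := E_{t∼N(0,1)}[φ(t)²] > 0 and B₄ := E_{t∼N(0,1)}[φ(t)⁴] < ∞, and let f(x) = Σ_{i=1}^k α_i φ(⟨w^{(i)}, x⟩) with α_i > 0 and unit vectors w^{(i)} ∈ ℝ^d. Then E_{x∼N^d}[f(x)⁴] ≤ (B₄ / B₂²) · k² · ( E_{x∼N^d}[f(x)²] )². -/
/-!
Let `f` be the network. Write `S = ∑ i, α i`, `A = ∑ i, α i ^ 2`, and let `B₂`, `B₄` be the second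
and fourth Gaussian moments of `φ`.
Each pre-activation `⟨w i, x⟩` is standard normal because `w i` is a unit vector
(`map_inner_stdGaussian`), so `φ ⟨w i, x⟩` has second and fourth moments `B₂` and `B₄`.
* Upper bound: two applications of the weighted Cauchy-Schwarz inequality give the pointwise bound
  `f ^ 4 ≤ S ^ 3 * ∑ i, α i * φ ⟨w i, x⟩ ^ 4`, hence `E[f ^ 4] ≤ S ^ 4 * B₄`.
* Lower bound: all summands of `f` are non-negative, so dropping the cross terms of `f ^ 2` gives
  `E[f ^ 2] ≥ A * B₂`.

The two are linked by `S ^ 2 ≤ k * A`.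
-/

open MeasureTheory ProbabilityTheory Real Finset

/-- One-hidden-layer network with activation `φ`: `x ↦ ∑ i, α i * φ ⟨w i, x⟩`. -/
noncomputable def phiNet (φ : ℝ → ℝ) {d k : ℕ} (α : Fin k → ℝ) (w : Fin k → Fin d → ℝ)
    (x : Fin d → ℝ) : ℝ :=
  ∑ i, α i * φ (∑ j, w i j * x j)

/-- A linear form with unit coefficient vector pushes the standard Gaussian on `ℝ^d` forward to the
standard normal law; the characteristic functions agree by independence of the coordinates. -/
lemma map_inner_stdGaussian {d : ℕ} (v : Fin d → ℝ) (hv : ∑ j, v j ^ 2 = 1) :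
    (stdGaussian d).map (fun x : Fin d → ℝ => ∑ j, v j * x j) = gaussianReal 0 1 := by
  have hm : Measurable (fun x : Fin d → ℝ => ∑ j, v j * x j) := by fun_prop
  have : IsProbabilityMeasure (stdGaussian d) := by unfold _root_.stdGaussian; infer_instance
  have := Measure.isProbabilityMeasure_map (μ := stdGaussian d) hm.aemeasurable
  refine Measure.ext_of_charFun ?_
  funext t
  rw [charFun_apply_real, integral_map hm.aemeasurable (by fun_prop)]
  have h1 : ∀ x : Fin d → ℝ, Complex.exp (t * ((∑ j, v j * x j : ℝ) : ℂ) * Complex.I)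
      = ∏ j, Complex.exp (((t * v j : ℝ) : ℂ) * (x j : ℂ) * Complex.I) := by
    intro x
    rw [← Complex.exp_sum]
    push_cast
    rw [Finset.mul_sum, Finset.sum_mul]
    congr 1
    exact Finset.sum_congr rfl fun j _ => by ring
  simp_rw [h1]
  unfold _root_.stdGaussian
  rw [integral_fintype_prod_eq_prod (𝕜 := ℂ)
    (f := fun j (y : ℝ) => Complex.exp (((t * v j : ℝ) : ℂ) * (y : ℂ) * Complex.I))]
  simp_rw [← charFun_apply_real, charFun_gaussianReal]
  rw [← Complex.exp_sum]
  congr 1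
  have hv' : ∑ j, (v j : ℂ) ^ 2 = 1 := by exact_mod_cast hv
  calc _ = ∑ j, (-(t : ℂ) ^ 2 / 2) * (v j : ℂ) ^ 2 :=
        Finset.sum_congr rfl fun j _ => by push_cast; ring
    _ = _ := by rw [← Finset.mul_sum, hv']; push_cast; ring

lemma integral_comp_inner {d : ℕ} (v : Fin d → ℝ) (hv : ∑ j, v j ^ 2 = 1) {g : ℝ → ℝ}
    (hg : Measurable g) :
    ∫ x, g (∑ j, v j * x j) ∂stdGaussian d = ∫ t, g t ∂gaussianReal 0 1 := by
  have hm : Measurable (fun x : Fin d → ℝ => ∑ j, v j * x j) := by fun_prop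
  rw [← map_inner_stdGaussian v hv, integral_map hm.aemeasurable hg.aestronglyMeasurable]

lemma integrable_comp_inner {d : ℕ} (v : Fin d → ℝ) (hv : ∑ j, v j ^ 2 = 1) {g : ℝ → ℝ}
    (hg : Integrable g (gaussianReal 0 1)) :
    Integrable (fun x : Fin d → ℝ => g (∑ j, v j * x j)) (stdGaussian d) := by
  have hm : Measurable (fun x : Fin d → ℝ => ∑ j, v j * x j) := by fun_prop
  rw [← map_inner_stdGaussian v hv] at hg
  exact hg.comp_measurable hm

lemma sq_weighted_sum_le {k : ℕ} (α y : Fin k → ℝ) (hα : ∀ i, 0 < α i) :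
    (∑ i, α i * y i) ^ 2 ≤ (∑ i, α i) * ∑ i, α i * y i ^ 2 :=
  Finset.sum_sq_le_sum_mul_sum_of_sq_le_mul _ (fun i _ => (hα i).le)
    (fun i _ => mul_nonneg (hα i).le (sq_nonneg _)) (fun i _ => le_of_eq (by ring))

lemma pow_four_weighted_sum_le {k : ℕ} (α y : Fin k → ℝ) (hα : ∀ i, 0 < α i) :
    (∑ i, α i * y i) ^ 4 ≤ (∑ i, α i) ^ 3 * ∑ i, α i * y i ^ 4 := by
  have h1 := sq_weighted_sum_le α y hα
  have h2 := sq_weighted_sum_le α (fun i => y i ^ 2) hα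
  calc (∑ i, α i * y i) ^ 4 = ((∑ i, α i * y i) ^ 2) ^ 2 := by ring
    _ ≤ ((∑ i, α i) * ∑ i, α i * y i ^ 2) ^ 2 := by gcongr
    _ = (∑ i, α i) ^ 2 * (∑ i, α i * y i ^ 2) ^ 2 := by ring
    _ ≤ (∑ i, α i) ^ 2 * ((∑ i, α i) * ∑ i, α i * (y i ^ 2) ^ 2) := by gcongr
    _ = _ := by
      rw [← mul_assoc, ← pow_succ]
      congr 1
      exact Finset.sum_congr rfl fun i _ => by ring

theorem stmt12 (d k : ℕ) (φ : ℝ → ℝ) (hφ : Measurable φ) (hφ0 : ∀ t, 0 ≤ φ t)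
    (hB2 : 0 < ∫ t, φ t ^ 2 ∂gaussianReal 0 1)
    (hB4 : Integrable (fun t => φ t ^ 4) (gaussianReal 0 1))
    (α : Fin k → ℝ) (w : Fin k → Fin d → ℝ)
    (hα : ∀ i, 0 < α i) (hw : ∀ i, ∑ j, w i j ^ 2 = 1) :
    ∫ x, phiNet φ α w x ^ 4 ∂stdGaussian d ≤
      ((∫ t, φ t ^ 4 ∂gaussianReal 0 1) / (∫ t, φ t ^ 2 ∂gaussianReal 0 1) ^ 2) *
        (k : ℝ) ^ 2 * (∫ x, phiNet φ α w x ^ 2 ∂stdGaussian d) ^ 2 := by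
  -- a non-integrable function has Bochner integral zero, so `hB2` yields integrability of `φ ^ 2`
  have hI2 : Integrable (fun t => φ t ^ 2) (gaussianReal 0 1) :=
    Integrable.of_integral_ne_zero hB2.ne'
  have hJ2 := fun i => integrable_comp_inner (w i) (hw i) hI2
  have hJ4 := fun i => integrable_comp_inner (w i) (hw i) hB4
  have hE2 := fun i => integral_comp_inner (w i) (hw i) (hφ.pow_const 2)
  have hE4 := fun i => integral_comp_inner (w i) (hw i) (hφ.pow_const 4)
  have hmeas : Measurable (phiNet φ α w) := by unfold phiNet; fun_prop
  have hB4' : 0 ≤ ∫ t, φ t ^ 4 ∂gaussianReal 0 1 := integral_nonneg fun t => by positivity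
  set B2 := ∫ t, φ t ^ 2 ∂gaussianReal 0 1
  set B4 := ∫ t, φ t ^ 4 ∂gaussianReal 0 1
  have upper : ∫ x, phiNet φ α w x ^ 4 ∂stdGaussian d ≤ (∑ i, α i) ^ 4 * B4 := by
    calc ∫ x, phiNet φ α w x ^ 4 ∂stdGaussian d
        ≤ ∫ x, (∑ i, α i) ^ 3 * ∑ i, α i * φ (∑ j, w i j * x j) ^ 4 ∂stdGaussian d := by
          refine integral_mono_of_nonneg (ae_of_all _ fun x => ?_) ?_ (ae_of_all _ fun x => ?_)
          · show 0 ≤ phiNet φ α w x ^ 4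
            positivity
          · exact (integrable_finsetSum _ fun i _ => (hJ4 i).const_mul (α i)).const_mul _
          · exact pow_four_weighted_sum_le α _ hα
      _ = (∑ i, α i) ^ 4 * B4 := by
          rw [integral_const_mul, integral_finsetSum _ fun i _ => (hJ4 i).const_mul (α i)]
          simp_rw [integral_const_mul, hE4]
          rw [← Finset.sum_mul]
          ring
  have hf2 : Integrable (fun x => phiNet φ α w x ^ 2) (stdGaussian d) := by
    refine ((integrable_finsetSum Finset.univ fun i _ => (hJ2 i).const_mul (α i)).const_mul
      (∑ i, α i)).mono' (hmeas.pow_const 2).aestronglyMeasurable (ae_of_all _ fun x => ?_)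
    rw [Real.norm_of_nonneg (sq_nonneg _)]
    exact sq_weighted_sum_le α _ hα
  have lower : (∑ i, α i ^ 2) * B2 ≤ ∫ x, phiNet φ α w x ^ 2 ∂stdGaussian d := by
    calc (∑ i, α i ^ 2) * B2
        = ∫ x, ∑ i, α i ^ 2 * φ (∑ j, w i j * x j) ^ 2 ∂stdGaussian d := by
          rw [integral_finsetSum _ fun i _ => (hJ2 i).const_mul (α i ^ 2)]
          simp_rw [integral_const_mul, hE2]
          rw [← Finset.sum_mul]
      _ ≤ _ := by
          refine integral_mono (integrable_finsetSum _ fun i _ => (hJ2 i).const_mul (α i ^ 2))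
            hf2 fun x => ?_
          simp only [← mul_pow]
          exact Finset.sum_sq_le_sq_sum_of_nonneg fun i _ => mul_nonneg (hα i).le (hφ0 _)
  have hS : (∑ i, α i) ^ 2 ≤ (k : ℝ) * ∑ i, α i ^ 2 := by
    simpa using sq_sum_le_card_mul_sum_sq (s := (Finset.univ : Finset (Fin k))) (f := α)
  calc _ ≤ (∑ i, α i) ^ 4 * B4 := upper
    _ = ((∑ i, α i) ^ 2) ^ 2 * B4 := by ring
    _ ≤ ((k : ℝ) * ∑ i, α i ^ 2) ^ 2 * B4 := by gcongr
    _ = B4 / B2 ^ 2 * (k : ℝ) ^ 2 * ((∑ i, α i ^ 2) * B2) ^ 2 := by field_simp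
    _ ≤ _ := by gcongr
end
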